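/- arXiv:math/9909142 — 3 statements merged into one kernel-verified Lean document; each statement's English description precedes it below -/
import Mathlib

section
/- Equality of composite rings of conjugate invariants: Let k be an algebraically closed field of characteristic zero and K an algebraically closed field extension of k of infinite transcendence degree over k. Let R be a finitely generated commutative K-algebra equipped with a continuous semilinear action of Aut(K/k), and let L be an intermediate field of K/k, finitely generated over k, such that the subring R₁ := { r ∈ R : σ(r) = r for every σ ∈ Aut(K/k) fixing L pointwise } spans R as a K-vector space. Let σ, τ ∈ Aut(K/k) be such that σ(L) and τ(L) are linearly disjoint over k inside K (i.e., the multiplication map σ(L) ⊗_k τ(L) → K is injective). Then the composite rings τ(R₁)·σ(L) and σ(R₁)·τ(L) are equal, that is, the k-subalgebra of R generated by τ(R₁) together with the image of σ(L) equals the k-subalgebra of R generated by σ(R₁) together with the image of τ(L). -/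
section
open TensorProduct

theorem aux_point {k A : Type*} [Field k] [IsAlgClosed k] [CommRing A] [IsDomain A] [Algebra k A]
    [Algebra.FiniteType k A] (a : A) (ha : a ≠ 0) : ∃ p : A →ₐ[k] k, p a ≠ 0 := by
  let B := Localization.Away a
  have : Nontrivial B := (IsLocalization.injective B
    (powers_le_nonZeroDivisors_of_noZeroDivisors ha)).nontrivial
  have h1 : Algebra.FiniteType A B := IsLocalization.finiteType_of_monoid_fg (Submonoid.powers a) B
  have h2 : Algebra.FiniteType k B := Algebra.FiniteType.trans ‹_› h1
  obtain ⟨m, hm⟩ := Ideal.exists_maximal B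
  let : Field (B ⧸ m) := Ideal.Quotient.field m
  have h3 : Algebra.FiniteType k (B ⧸ m) := inferInstance
  have h4 : Module.Finite k (B ⧸ m) := finite_of_finite_type_of_isJacobsonRing k (B ⧸ m)
  let e : k ≃ₐ[k] (B ⧸ m) := AlgEquiv.ofBijective (Algebra.ofId k (B ⧸ m))
    IsAlgClosed.algebraMap_bijective_of_isIntegral
  refine ⟨e.symm.toAlgHom.comp ((Ideal.Quotient.mkₐ k m).comp (IsScalarTower.toAlgHom k A B)), ?_⟩
  have hu : IsUnit (algebraMap A B a) := IsLocalization.Away.algebraMap_isUnit a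
  have := hu.map (e.symm.toAlgHom.comp (Ideal.Quotient.mkₐ k m))
  exact this.ne_zero

theorem aux_domain (k A B : Type*) [Field k] [IsAlgClosed k] [CommRing A] [IsDomain A]
    [Algebra k A] [CommRing B] [IsDomain B] [Algebra k B] : NoZeroDivisors (A ⊗[k] B) := by
  refine ⟨fun {x y} hxy => ?_⟩
  by_contra! hne
  let e := Module.Basis.ofVectorSpace k B
  let E := Algebra.TensorProduct.basis A e
  obtain ⟨i, hi⟩ : ∃ i, E.repr x i ≠ 0 := by
    by_contra! h
    exact hne.1 (E.repr.injective (by ext i; simp [h i]))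
  obtain ⟨j, hj⟩ : ∃ i, E.repr y i ≠ 0 := by
    by_contra! h
    exact hne.2 (E.repr.injective (by ext i; simp [h i]))
  classical
  let s : Finset A := (E.repr x).support.image (E.repr x) ∪ (E.repr y).support.image (E.repr y)
  let C : Subalgebra k A := Algebra.adjoin k (s : Set A)
  have hC : Algebra.FiniteType k C := by
    rw [← Subalgebra.fg_iff_finiteType]; exact ⟨s, rfl⟩
  let E' := Algebra.TensorProduct.basis C e
  have hinj : Function.Injective (Algebra.TensorProduct.map C.val (AlgHom.id k B)) :=
    TensorProduct.map_injective_of_flat_flat _ _ Subtype.val_injective Function.injective_id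
  have hrep : ∀ (z : C ⊗[k] B) i, (E'.repr z i : A) =
      E.repr (Algebra.TensorProduct.map C.val (AlgHom.id k B) z) i := by
    intro z i
    induction z with
    | zero => simp
    | add a b ha hb => simp [ha, hb]
    | tmul a b => simp [E, E', Algebra.TensorProduct.basis_repr_tmul]
  have key : ∀ z : A ⊗[k] B, (∀ i, E.repr z i ∈ C) →
      ∃ z' : C ⊗[k] B, Algebra.TensorProduct.map C.val (AlgHom.id k B) z' = z ∧
        ∀ i, (E'.repr z' i : A) = E.repr z i := by
    intro z hz
    have hz' : Algebra.TensorProduct.map C.val (AlgHom.id k B)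
        (∑ i ∈ (E.repr z).support, (⟨E.repr z i, hz i⟩ : C) ⊗ₜ e i) = z := by
      conv_rhs => rw [← E.linearCombination_repr z, Finsupp.linearCombination_apply, Finsupp.sum]
      simp [E, map_sum, TensorProduct.smul_tmul']
    refine ⟨_, hz', fun i => ?_⟩
    conv_rhs => rw [← hz']
    exact hrep _ i
  have hxC : ∀ i, E.repr x i ∈ C := by
    intro i
    by_cases h : E.repr x i = 0
    · rw [h]; exact C.zero_mem
    · apply Algebra.subset_adjoin
      simp only [s, Finset.coe_union, Finset.coe_image]
      exact Or.inl ⟨i, by simpa using h, rfl⟩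
  have hyC : ∀ i, E.repr y i ∈ C := by
    intro i
    by_cases h : E.repr y i = 0
    · rw [h]; exact C.zero_mem
    · apply Algebra.subset_adjoin
      simp only [s, Finset.coe_union, Finset.coe_image]
      exact Or.inr ⟨i, by simpa using h, rfl⟩
  obtain ⟨x', hx', hx''⟩ := key x hxC
  obtain ⟨y', hy', hy''⟩ := key y hyC
  have hxy' : x' * y' = 0 := hinj (by rw [map_mul, hx', hy', hxy, map_zero])
  obtain ⟨p, hp⟩ := aux_point (k := k) (A := C) (E'.repr x' i * E'.repr y' j) (by
    intro h
    have := congrArg (Subtype.val) h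
    simp only [MulMemClass.coe_mul, hx'', hy'', ZeroMemClass.coe_zero, mul_eq_zero] at this
    tauto)
  let P : C ⊗[k] B →ₐ[k] B := Algebra.TensorProduct.lift ((Algebra.ofId k B).comp p) (AlgHom.id k B)
    (fun _ _ => Commute.all _ _)
  have hP : ∀ z i, e.repr (P z) i = p (E'.repr z i) := by
    intro z i
    induction z with
    | zero => simp
    | add a b ha hb => simp [ha, hb]
    | tmul a b =>
      simp [P, E', Algebra.TensorProduct.basis_repr_tmul, Algebra.ofId_apply, ← Algebra.smul_def]
      try ring
  have : P x' * P y' = 0 := by rw [← map_mul, hxy', map_zero]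
  rw [map_mul] at hp
  rcases mul_eq_zero.1 this with h | h
  · apply hp; rw [← hP, h]; simp
  · apply hp; rw [← hP y', h]; simp

/-- two transcendence bases + base automorphism extend to an automorphism of `K`. -/
theorem aux_ext {F K ι : Type*} [Field F] [Field K] [IsAlgClosed K] [Algebra F K]
    (v w : ι → K) (hv : IsTranscendenceBasis F v) (hw : IsTranscendenceBasis F w) (g : F ≃+* F) :
    ∃ e : K ≃+* K, (∀ i, e (v i) = w i) ∧ ∀ a, e (algebraMap F K a) = algebraMap F K (g a) := by
  let := IsAlgClosed.isAlgClosure_of_transcendence_basis v hv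
  let := IsAlgClosed.isAlgClosure_of_transcendence_basis w hw
  let E : Algebra.adjoin F (Set.range v) ≃+* Algebra.adjoin F (Set.range w) :=
    (hv.1.aevalEquiv.symm.toRingEquiv.trans (MvPolynomial.mapEquiv ι g)).trans
      hw.1.aevalEquiv.toRingEquiv
  refine ⟨IsAlgClosure.equivOfEquiv K K E, fun i => ?_, fun a => ?_⟩
  · have h1 : v i = algebraMap (Algebra.adjoin F (Set.range v)) K
        (hv.1.aevalEquiv (MvPolynomial.X i)) := by simp
    rw [h1, IsAlgClosure.equivOfEquiv_algebraMap]
    simp [E]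
  · have h1 : algebraMap F K a = algebraMap (Algebra.adjoin F (Set.range v)) K
        (hv.1.aevalEquiv (MvPolynomial.C a)) := by simp
    rw [h1, IsAlgClosure.equivOfEquiv_algebraMap]
    simp [E]

theorem aux_swap {F K ι : Type*} [Field F] [Field K] [IsAlgClosed K] [Algebra F K]
    (x y : ι → K) (h : AlgebraicIndependent F (Sum.elim x y)) :
    ∃ e : K ≃ₐ[F] K, ∀ i, e (x i) = y i := by
  obtain ⟨t, ht, htb⟩ := exists_isTranscendenceBasis_superset h.coe_range
  let j : ι ⊕ ι ↪ t := ⟨fun a => ⟨Sum.elim x y a, ht ⟨a, rfl⟩⟩, fun a b hab =>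
    h.injective (congrArg Subtype.val hab)⟩
  let π : Equiv.Perm t := Equiv.Perm.viaEmbedding (Equiv.sumComm ι ι) j
  obtain ⟨e, he1, he2⟩ := aux_ext (fun a : t => (a : K)) ((fun a : t => (a : K)) ∘ π) htb
    (htb.comp_equiv π) (RingEquiv.refl F)
  refine ⟨AlgEquiv.ofRingEquiv (f := e) (by simpa using he2), fun i => ?_⟩
  have := he1 (j (Sum.inl i))
  simp only [Function.comp, π, Equiv.Perm.viaEmbedding_apply] at this
  exact this


theorem aux_ai {k K R ι : Type*} [Field k] [Field K] [Algebra k K] [CommRing R] [Algebra R K]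
    (hinj : Function.Injective (algebraMap R K)) (N : IntermediateField k K)
    (h : ∀ r : R, algebraMap R K r ∈ N) (y : ι → K) (hy : AlgebraicIndependent N y) :
    AlgebraicIndependent R y :=
  AlgebraicIndependent.of_ringHom_of_comp_eq (S := N) (B := K)
    ((algebraMap R K).codRestrict N h) (RingHom.id K) hy
    (fun _ _ hab => hinj (congrArg Subtype.val hab)) rfl

theorem aux_adjoin_mem {k K : Type*} [Field k] [Field K] [Algebra k K]
    (M N : IntermediateField k K) (hMN : M ≤ N) (s : Set K) (hs : s ⊆ N)
    (r : K) (hr : r ∈ Algebra.adjoin M s) : r ∈ N := by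
  induction hr using Algebra.adjoin_induction with
  | mem x hx => exact hs hx
  | algebraMap r => exact hMN r.2
  | add x y _ _ hx hy => exact N.add_mem hx hy
  | mul x y _ _ hx hy => exact N.mul_mem hx hy

theorem aux_fixed {k K : Type*} [Field k] [CharZero k] [Field K] [IsAlgClosed K] [Algebra k K]
    (htr : ∀ L' : IntermediateField k K, L'.FG → ∃ x : K, Transcendental L' x)
    (M : IntermediateField k K) (hM : M.FG) (x : K)
    (hx : ∀ g : K ≃ₐ[k] K, (∀ y ∈ M, g y = y) → g x = x) : x ∈ M := by
  by_cases hxa : IsAlgebraic M x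
  · let M' := algebraicClosure M K
    have : IsGalois M M' := { to_normal := IsAlgClosure.normal M M' }
    let x' : M' := ⟨x, mem_algebraicClosure_iff.2 hxa⟩
    have h := (InfiniteGalois.mem_range_algebraMap_iff_fixed (k := M) x').2 (by
      intro g
      obtain ⟨s, hs⟩ := exists_isTranscendenceBasis M' K
      obtain ⟨e, -, he⟩ := aux_ext _ _ hs hs g.toRingEquiv
      have hek : ∀ y : M, e y = y := by
        intro y
        have := he (algebraMap M M' y)
        simpa using this
      have h2 := hx (AlgEquiv.ofRingEquiv (f := e) (fun a => hek (algebraMap k M a)))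
        (fun y hy => hek ⟨y, hy⟩)
      have h3 := he x'
      apply Subtype.ext
      exact h3.symm.trans h2)
    obtain ⟨y, hy⟩ := h
    have : (y : K) = x := congrArg Subtype.val hy
    exact this ▸ y.2
  · exfalso
    let N := M ⊔ IntermediateField.adjoin k {x}
    obtain ⟨y, hy⟩ := htr N (IntermediateField.fg_sup hM
      (IntermediateField.fg_adjoin_of_finite (Set.finite_singleton x)))
    have hxN : x ∈ N := (le_sup_right : _ ≤ N) (IntermediateField.mem_adjoin_simple_self k x)
    have h1 : AlgebraicIndependent M (fun _ : Unit => x) := by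
      rw [algebraicIndependent_unique_type_iff]; exact hxa
    have h2 : AlgebraicIndependent N (fun _ : Unit => y) := by
      rw [algebraicIndependent_unique_type_iff]; exact hy
    have h3 : AlgebraicIndependent (Algebra.adjoin M (Set.range (fun _ : Unit => x)))
        (fun _ : Unit => y) :=
      aux_ai (R := Algebra.adjoin M (Set.range (fun _ : Unit => x))) Subtype.val_injective N (fun r => aux_adjoin_mem M N le_sup_left _
        (by rintro _ ⟨_, rfl⟩; exact hxN) r r.2) _ h2
    obtain ⟨e, he⟩ := aux_swap _ _ (h1.sumElim h3)
    have h4 := hx (e.restrictScalars k) (fun y hy => e.commutes ⟨y, hy⟩)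
    have h5 : e x = x := h4
    have h6 : y = x := e.injective ((he ()).trans h5.symm)
    apply hy
    rw [h6]
    exact isAlgebraic_algebraMap (⟨x, hxN⟩ : N)

theorem aux_many {k K : Type*} [Field k] [Field K] [Algebra k K]
    (htr : ∀ L' : IntermediateField k K, L'.FG → ∃ x : K, Transcendental L' x)
    (N : IntermediateField k K) (hN : N.FG) (ι : Type*) [Finite ι] :
    ∃ y : ι → K, AlgebraicIndependent N y := by
  induction ι using Finite.induction_empty_option with
  | @of_equiv α β e h =>
    obtain ⟨y, hy⟩ := h
    exact ⟨y ∘ e.symm, hy.comp _ e.symm.injective⟩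
  | h_empty => exact ⟨fun a => a.elim, by
      rw [algebraicIndependent_empty_type_iff]; exact Subtype.val_injective⟩
  | @h_option α _ h =>
    obtain ⟨y, hy⟩ := h
    let N' := N ⊔ IntermediateField.adjoin k (Set.range y)
    obtain ⟨z, hz⟩ := htr N' (IntermediateField.fg_sup hN
      (IntermediateField.fg_adjoin_of_finite (Set.finite_range y)))
    refine ⟨_, (hy.option_iff_transcendental z).2 ?_⟩
    rw [← algebraicIndependent_unique_type_iff (ι := Unit) (x := fun _ => z)] at hz ⊢
    exact aux_ai (R := Algebra.adjoin N (Set.range y)) Subtype.val_injective N' (fun r => aux_adjoin_mem N N' le_sup_left _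
      ((IntermediateField.subset_adjoin k _).trans
        (le_sup_right : IntermediateField.adjoin k (Set.range y) ≤ N')) r r.2) _ hz

theorem aux_inj {k F L T K ι : Type*} [Field k] [Field F] [Algebra k F] [Field L] [Algebra k L]
    [CommRing T] [IsDomain T] [Algebra F T] [Field K] [Algebra F K] (Φ : T →ₐ[F] K)
    (r : L →+* T) (hr : ∀ a, r (algebraMap k L a) = algebraMap F T (algebraMap k F a))
    (X : ι → L) (hX : ∀ l : L, IsAlgebraic (Algebra.adjoin k (Set.range X)) l)
    (hi : AlgebraicIndependent F (fun i => Φ (r (X i))))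
    (hgen : ∀ t : T, t ∈ Algebra.adjoin F (Set.range r)) : Function.Injective Φ := by
  have hC : ∀ c ∈ Algebra.adjoin F (Set.range (fun i => r (X i))), Φ c = 0 → c = 0 := by
    intro c hc h0
    rw [Algebra.adjoin_range_eq_range_aeval] at hc
    obtain ⟨p, rfl⟩ := hc
    have : MvPolynomial.aeval (fun i => Φ (r (X i))) p = 0 := by
      rw [← h0]
      exact (MvPolynomial.comp_aeval_apply _ Φ p).symm
    rw [hi.eq_zero_of_aeval_eq_zero p this, map_zero]
  have hD : ∀ d ∈ Algebra.adjoin k (Set.range X),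
      r d ∈ Algebra.adjoin F (Set.range (fun i => r (X i))) := by
    intro d hd
    induction hd using Algebra.adjoin_induction with
    | mem x hx => obtain ⟨i, rfl⟩ := hx; exact Algebra.subset_adjoin ⟨i, rfl⟩
    | algebraMap a => rw [hr]; exact Subalgebra.algebraMap_mem _ _
    | add x y _ _ hx hy => rw [map_add]; exact add_mem hx hy
    | mul x y _ _ hx hy => rw [map_mul]; exact mul_mem hx hy
  have hL' : ∀ l : L, IsAlgebraic (Algebra.adjoin F (Set.range (fun i => r (X i)))) (r l) := by
    intro l
    let f : Algebra.adjoin k (Set.range X) →+* Algebra.adjoin F (Set.range (fun i => r (X i))) :=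
      (r.comp (Algebra.adjoin k (Set.range X)).val.toRingHom).codRestrict _ (fun d => hD d d.2)
    refine (hX l).ringHom_of_comp_eq f r ?_ rfl
    intro a b hab
    exact Subtype.ext (r.injective (congrArg Subtype.val hab))
  have halg : ∀ z : T, IsAlgebraic (Algebra.adjoin F (Set.range (fun i => r (X i)))) z := by
    intro z
    induction hgen z using Algebra.adjoin_induction with
    | mem x hx => obtain ⟨l, rfl⟩ := hx; exact hL' l
    | algebraMap a =>
      exact isAlgebraic_algebraMap
        (algebraMap F (Algebra.adjoin F (Set.range (fun i => r (X i)))) a)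
    | add x y _ _ hx hy => exact hx.add hy
    | mul x y _ _ hx hy => exact hx.mul hy
  rw [injective_iff_map_eq_zero]
  intro z hz
  by_contra hz0
  obtain ⟨c, hc0, hc⟩ := (halg z).exists_nonzero_dvd (mem_nonZeroDivisors_of_ne_zero hz0)
  apply hc0
  apply Subtype.ext
  apply hC _ c.2
  obtain ⟨w, hw⟩ := hc
  change (c : T) = _ at hw
  rw [hw, map_mul, hz, zero_mul]

theorem aux_li {k F L K ι κ : Type*} [Field k] [IsAlgClosed k] [Field F] [Algebra k F] [Field L]
    [Algebra k L] [Field K] [Algebra F K] [Algebra k K] [IsScalarTower k F K] (j : L →ₐ[k] K)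
    (X : ι → L) (hX : ∀ l : L, IsAlgebraic (Algebra.adjoin k (Set.range X)) l)
    (hi : AlgebraicIndependent F (fun i => j (X i))) (b : Module.Basis κ k L) :
    LinearIndependent F (fun i => j (b i)) := by
  let Φ : F ⊗[k] L →ₐ[F] K := Algebra.TensorProduct.lift (Algebra.ofId F K) j
    (fun _ _ => Commute.all _ _)
  have hdom := aux_domain k F L
  have hnt : Nontrivial (F ⊗[k] L) := Φ.toRingHom.domain_nontrivial
  have : IsDomain (F ⊗[k] L) := @NoZeroDivisors.to_isDomain (F ⊗[k] L) inferInstance hnt hdom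
  have hΦ : Function.Injective Φ := by
    refine aux_inj (k := k) Φ
      (Algebra.TensorProduct.includeRight : L →ₐ[k] F ⊗[k] L).toRingHom ?_ X hX ?_ ?_
    · intro a
      simp [Algebra.algebraMap_eq_smul_one, Algebra.TensorProduct.one_def]
    · simpa [Φ] using hi
    · intro t
      induction t with
      | zero => exact zero_mem _
      | add a b ha hb => exact add_mem ha hb
      | tmul m l =>
        have : m ⊗ₜ[k] l = m • ((1 : F) ⊗ₜ[k] l) := by simp [TensorProduct.smul_tmul']
        rw [this]
        exact Subalgebra.smul_mem _ (Algebra.subset_adjoin (Set.mem_range_self l)) m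
  have := (Algebra.TensorProduct.basis F b).linearIndependent.map' Φ.toLinearMap
    (LinearMap.ker_eq_bot.2 hΦ)
  have h2 : (fun i => j (b i)) = Φ.toLinearMap ∘ (Algebra.TensorProduct.basis F b) := by
    funext i
    simp [Φ]
  rw [h2]
  exact this

theorem aux_rho {k K : Type*} [Field k] [IsAlgClosed k] [Field K] [IsAlgClosed K] [Algebra k K]
    (htr : ∀ L' : IntermediateField k K, L'.FG → ∃ x : K, Transcendental L' x)
    (M L : IntermediateField k K) (hM : M.FG) (hL : L.FG) :
    ∃ ρ : K ≃ₐ[k] K, ∀ (ι : Type _) (e : Module.Basis ι k L),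
      LinearIndependent M (fun i => ρ (e i)) := by
  obtain ⟨s, hs⟩ := exists_isTranscendenceBasis k L
  have : Algebra.EssFiniteType k L := IntermediateField.essFiniteType_iff.2 hL
  have hfin : Finite s := finite_of_isTranscendenceBasis hs
  obtain ⟨y, hy⟩ := aux_many htr (M ⊔ L) (IntermediateField.fg_sup hM hL) s
  have h1 : AlgebraicIndependent k (fun i : s => ((i : L) : K)) :=
    hs.1.map' (f := L.val) Subtype.val_injective
  have h3 : AlgebraicIndependent (Algebra.adjoin k (Set.range (fun i : s => ((i : L) : K)))) y := by
    refine aux_ai Subtype.val_injective (M ⊔ L) (fun r => ?_) _ hy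
    have : Algebra.adjoin k (Set.range (fun i : s => ((i : L) : K))) ≤ (M ⊔ L).toSubalgebra := by
      rw [Algebra.adjoin_le_iff]
      rintro _ ⟨i, rfl⟩
      exact (le_sup_right : L ≤ M ⊔ L) i.1.2
    exact this r.2
  obtain ⟨e, he⟩ := aux_swap _ _ (h1.sumElim h3)
  have hyM : AlgebraicIndependent M y :=
    aux_ai Subtype.val_injective (M ⊔ L) (fun r => (le_sup_left : M ≤ M ⊔ L) r.2) _ hy
  refine ⟨e.symm, fun ι b => ?_⟩
  refine aux_li (e.symm.toAlgHom.comp L.val) (fun i : s => (i : L))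
    (fun l => hs.isAlgebraic.isAlgebraic l) ?_ b
  convert hyM using 2 with i
  simp [← he]


theorem aux_nz {k E Q E3 : Type*} [Field k] [Field E] [Algebra k E] [CommRing Q] [Nontrivial Q]
    [Algebra k Q] [Field E3] [Algebra k E3] (i : E →ₐ[k] Q) (f : E ⊗[k] E3) (hf : f ≠ 0) :
    Algebra.TensorProduct.map i (AlgHom.id k E3) f ≠ 0 := by
  have h : Function.Injective (Algebra.TensorProduct.map i (AlgHom.id k E3)) :=
    TensorProduct.map_injective_of_flat_flat i.toLinearMap LinearMap.id
      i.toRingHom.injective Function.injective_id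
  intro h0
  exact hf (h (h0.trans (map_zero _).symm))

theorem aux_unit {k E1 E2 E3 S ι : Type*} [Field k] [IsAlgClosed k] [Field E1] [Algebra k E1]
    [Field E2] [Algebra k E2] [Field E3] [Algebra k E3] [CommRing S] [Algebra k S]
    (i1 : E1 →ₐ[k] S) (i2 : E2 →ₐ[k] S) (f : E1 ⊗[k] E3) (hf : f ≠ 0) (g : E2 ⊗[k] E3)
    (hg : g ≠ 0) (e : Module.Basis ι k E3) :
    Ideal.span (Set.range ((Algebra.TensorProduct.basis S e).repr
      (Algebra.TensorProduct.map i1 (AlgHom.id k E3) f *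
        Algebra.TensorProduct.map i2 (AlgHom.id k E3) g))) = ⊤ := by
  by_contra hne
  obtain ⟨m, hm, hle⟩ := Ideal.exists_le_maximal _ hne
  set h := Algebra.TensorProduct.map i1 (AlgHom.id k E3) f *
        Algebra.TensorProduct.map i2 (AlgHom.id k E3) g with hh
  let ψ : S ⊗[k] E3 →ₐ[k] (S ⧸ m) ⊗[k] E3 :=
    Algebra.TensorProduct.map (Ideal.Quotient.mkₐ k m) (AlgHom.id k E3)
  have hψ0 : ψ h = 0 := by
    rw [← (Algebra.TensorProduct.basis S e).linearCombination_repr h,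
      Finsupp.linearCombination_apply, Finsupp.sum, map_sum]
    refine Finset.sum_eq_zero fun i _ => ?_
    have hi : Ideal.Quotient.mk m ((Algebra.TensorProduct.basis S e).repr h i) = 0 :=
      Ideal.Quotient.eq_zero_iff_mem.2 (hle (Ideal.subset_span ⟨i, rfl⟩))
    rw [Algebra.TensorProduct.basis_apply, TensorProduct.smul_tmul', Algebra.TensorProduct.map_tmul]
    simp [hi]
  have hd := aux_domain k (S ⧸ m) E3
  have e1 : ψ (Algebra.TensorProduct.map i1 (AlgHom.id k E3) f) =
      Algebra.TensorProduct.map ((Ideal.Quotient.mkₐ k m).comp i1) (AlgHom.id k E3) f := by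
    have : ψ.comp (Algebra.TensorProduct.map i1 (AlgHom.id k E3)) =
        Algebra.TensorProduct.map ((Ideal.Quotient.mkₐ k m).comp i1) (AlgHom.id k E3) := by
      ext x <;> simp [ψ]
    exact congrArg (fun a => a f) this
  have e2 : ψ (Algebra.TensorProduct.map i2 (AlgHom.id k E3) g) =
      Algebra.TensorProduct.map ((Ideal.Quotient.mkₐ k m).comp i2) (AlgHom.id k E3) g := by
    have : ψ.comp (Algebra.TensorProduct.map i2 (AlgHom.id k E3)) =
        Algebra.TensorProduct.map ((Ideal.Quotient.mkₐ k m).comp i2) (AlgHom.id k E3) := by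
      ext x <;> simp [ψ]
    exact congrArg (fun a => a g) this
  rw [hh, map_mul, e1, e2] at hψ0
  rcases hd.eq_zero_or_eq_zero_of_mul_eq_zero hψ0 with h0 | h0
  · exact aux_nz _ f hf h0
  · exact aux_nz _ g hg h0

theorem aux_key {k K E3 ι : Type*} [Field k] [IsAlgClosed k] [Field K] [Algebra k K]
    [Field E3] [Algebra k E3] (j : E3 →ₐ[k] K) (E1 E2 M : IntermediateField k K)
    (h1 : E1 ≤ M) (h2 : E2 ≤ M) (e : Module.Basis ι k E3)
    (hli : LinearIndependent M (fun i => j (e i)))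
    (f g m : K) (hf : f ∈ E1.toSubalgebra ⊔ j.range) (hf0 : f ≠ 0)
    (hg : g ∈ E2.toSubalgebra ⊔ j.range) (hg0 : g ≠ 0) (hm : m ∈ M)
    (hfg : f * g * m ∈ (E1.toSubalgebra ⊔ E2.toSubalgebra) ⊔ j.range) :
    m ∈ E1.toSubalgebra ⊔ E2.toSubalgebra := by
  set S := E1.toSubalgebra ⊔ E2.toSubalgebra with hS
  have hSM : S ≤ M.toSubalgebra := sup_le h1 h2
  have hr : ∀ T : Subalgebra k K, ∀ x, x ∈ T ⊔ j.range →
      ∃ y, Algebra.TensorProduct.productMap T.val j y = x := by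
    intro T x hx
    rw [← T.range_val, ← Algebra.TensorProduct.productMap_range] at hx
    exact hx
  obtain ⟨f', hf'⟩ := hr _ f hf
  obtain ⟨g', hg'⟩ := hr _ g hg
  obtain ⟨t, ht⟩ := hr _ _ hfg
  have hf0' : f' ≠ 0 := by rintro rfl; exact hf0 (by rw [← hf', map_zero])
  have hg0' : g' ≠ 0 := by rintro rfl; exact hg0 (by rw [← hg', map_zero])
  let i1 : E1 →ₐ[k] S := Subalgebra.inclusion (le_sup_left : E1.toSubalgebra ≤ S)
  let i2 : E2 →ₐ[k] S := Subalgebra.inclusion (le_sup_right : E2.toSubalgebra ≤ S)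
  have hu := aux_unit i1 i2 f' hf0' g' hg0' e
  set h := Algebra.TensorProduct.map i1 (AlgHom.id k E3) f' *
        Algebra.TensorProduct.map i2 (AlgHom.id k E3) g' with hh
  let Ψ : S ⊗[k] E3 →ₐ[k] K := Algebra.TensorProduct.productMap S.val j
  have hΨf : Ψ (Algebra.TensorProduct.map i1 (AlgHom.id k E3) f') = f := by
    rw [← hf']
    have : Ψ.comp (Algebra.TensorProduct.map i1 (AlgHom.id k E3)) =
      Algebra.TensorProduct.productMap E1.toSubalgebra.val j := by
      ext x <;> simp [Ψ, i1]
      rfl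
    exact congrArg (fun a => a f') this
  have hΨg : Ψ (Algebra.TensorProduct.map i2 (AlgHom.id k E3) g') = g := by
    rw [← hg']
    have : Ψ.comp (Algebra.TensorProduct.map i2 (AlgHom.id k E3)) =
      Algebra.TensorProduct.productMap E2.toSubalgebra.val j := by
      ext x <;> simp [Ψ, i2]
      rfl
    exact congrArg (fun a => a g') this
  have hΨh : Ψ h = f * g := by rw [hh, map_mul, hΨf, hΨg]
  let B := Algebra.TensorProduct.basis S e
  have hΨ : ∀ z, Ψ z = (B.repr z).sum (fun i s => (s : K) * j (e i)) := by
    intro z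
    conv_lhs => rw [← B.linearCombination_repr z]
    rw [Finsupp.linearCombination_apply, Finsupp.sum, map_sum]
    refine Finset.sum_congr rfl fun i _ => ?_
    simp [B, Ψ, TensorProduct.smul_tmul']
  have hcoef : ∀ i, m * (B.repr h i : K) = B.repr t i := by
    have hincl : Function.Injective (Subalgebra.inclusion hSM) := Subalgebra.inclusion_injective hSM
    let c : S ⊗[k] E3 → (ι →₀ M) := fun z =>
      (B.repr z).mapRange (fun s : S => (⟨(s : K), hSM s.2⟩ : M)) rfl
    have hc : ∀ z, Ψ z = Finsupp.linearCombination M (fun i => j (e i)) (c z) := by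
      intro z
      rw [hΨ, Finsupp.linearCombination_apply, Finsupp.sum_mapRange_index (by simp)]
      rfl
    have key : (⟨m, hm⟩ : M) • c h = c t := by
      apply hli
      rw [map_smul, ← hc, ← hc, hΨh]
      change m * (f * g) = _
      rw [mul_comm, ← ht]
    intro i
    have := congrArg Subtype.val (DFunLike.congr_fun key i)
    exact this
  let I : Ideal S :=
    { carrier := {s | m * (s : K) ∈ S}
      add_mem' := by
        intro a b ha hb
        simp only [Set.mem_ofPred_eq] at *
        push_cast
        rw [mul_add]; exact add_mem ha hb
      zero_mem' := by simp
      smul_mem' := by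
        intro a b hb
        simp only [Set.mem_ofPred_eq, smul_eq_mul] at *
        push_cast
        rw [mul_left_comm]; exact mul_mem a.2 hb }
  have hI : (1 : S) ∈ I := by
    have : Ideal.span (Set.range (B.repr h)) ≤ I := by
      rw [Ideal.span_le]
      rintro _ ⟨i, rfl⟩
      change m * (B.repr h i : K) ∈ S
      rw [hcoef]
      exact (B.repr t i).2
    exact this (by rw [hu]; trivial)
  have hI' : m * ((1 : S) : K) ∈ S := hI
  simpa using hI'


theorem aux_mapFG {k K : Type*} [Field k] [Field K] [Algebra k K] (L : IntermediateField k K)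
    (hL : L.FG) (g : K →ₐ[k] K) : (L.map g).FG := by
  obtain ⟨s, rfl⟩ := hL
  rw [IntermediateField.adjoin_map]
  exact IntermediateField.fg_adjoin_of_finite (s.finite_toSet.image g)

theorem aux_frac {k K : Type*} [Field k] [Field K] [Algebra k K] (E F : IntermediateField k K)
    (x : K) (hx : x ∈ E ⊔ F) :
    ∃ d ∈ E.toSubalgebra ⊔ F.toSubalgebra, d ≠ 0 ∧ d * x ∈ E.toSubalgebra ⊔ F.toSubalgebra := by
  have h : E ⊔ F = IntermediateField.adjoin k ((E : Set K) ∪ F) := by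
    rw [IntermediateField.adjoin_union, IntermediateField.adjoin_self, IntermediateField.adjoin_self]
  have h' : Algebra.adjoin k ((E : Set K) ∪ F) = E.toSubalgebra ⊔ F.toSubalgebra := by
    rw [Algebra.adjoin_union]
    congr 1
    · exact Algebra.adjoin_eq E.toSubalgebra
    · exact Algebra.adjoin_eq F.toSubalgebra
  rw [h, IntermediateField.mem_adjoin_iff_div, h'] at hx
  obtain ⟨r, hr, s, hs, rfl⟩ := hx
  by_cases h0 : s = 0
  · exact ⟨1, one_mem _, one_ne_zero, by simp [h0]⟩
  · exact ⟨s, hs, h0, by rwa [mul_div_cancel₀ _ h0]⟩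

theorem aux_denom {k K ι : Type*} [Field k] [Field K] [Algebra k K] (E F : IntermediateField k K)
    (x : ι → K) (T : Finset ι) (hx : ∀ i ∈ T, x i ∈ E ⊔ F) :
    ∃ d ∈ E.toSubalgebra ⊔ F.toSubalgebra, d ≠ 0 ∧
      ∀ i ∈ T, d * x i ∈ E.toSubalgebra ⊔ F.toSubalgebra := by
  classical
  induction T using Finset.induction_on with
  | empty => exact ⟨1, one_mem _, one_ne_zero, by simp⟩
  | insert a T _ ih =>
    obtain ⟨d, hd, hd0, h⟩ := ih (fun i hi => hx i (Finset.mem_insert_of_mem hi))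
    obtain ⟨d', hd', hd0', h'⟩ := aux_frac E F (x a) (hx a (Finset.mem_insert_self _ _))
    refine ⟨d * d', mul_mem hd hd', mul_ne_zero hd0 hd0', fun i hi => ?_⟩
    rcases Finset.mem_insert.1 hi with rfl | hi
    · rw [mul_assoc]; exact mul_mem hd h'
    · rw [mul_comm d, mul_assoc]; exact mul_mem hd' (h i hi)

theorem aux_coord {k K : Type} [Field k] [CharZero k] [Field K] [IsAlgClosed K]
    [Algebra k K]
    (htr : ∀ L' : IntermediateField k K, L'.FG → ∃ x : K, Transcendental L' x)
    {R : Type} [CommRing R] [Algebra K R] (φ : (K ≃ₐ[k] K) →* (R ≃+* R))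
    (hsm : ∀ (σ : K ≃ₐ[k] K) (c : K) (r : R), φ σ (c • r) = σ c • φ σ r)
    {ι : Type} (c : Module.Basis ι K R) (N : IntermediateField k K) (hN : N.FG)
    (hc : ∀ i, ∀ g : K ≃ₐ[k] K, (∀ x ∈ N, g x = x) → φ g (c i) = c i) (r : R)
    (hr : ∀ g : K ≃ₐ[k] K, (∀ x ∈ N, g x = x) → φ g r = r) (i : ι) : c.repr r i ∈ N := by
  refine aux_fixed htr N hN _ fun g hg => ?_
  have h1 : r = Finsupp.linearCombination K c ((c.repr r).mapRange g (map_zero g)) := by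
    conv_lhs => rw [← hr g hg, ← c.linearCombination_repr r]
    rw [Finsupp.linearCombination_apply, Finsupp.linearCombination_apply, Finsupp.sum, map_sum,
      Finsupp.sum_mapRange_index (by simp)]
    refine Finset.sum_congr rfl fun l _ => ?_
    rw [hsm, hc l g hg]
  have h2 := congrArg (fun z => c.repr z i) h1
  simp only [c.repr_linearCombination, Finsupp.mapRange_apply] at h2
  exact h2.symm

theorem aux_basis {k K : Type} [Field k] [Field K] [Algebra k K]
    {R : Type} [CommRing R] [Algebra K R] (φ : (K ≃ₐ[k] K) →* (R ≃+* R))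
    (hsm : ∀ (σ : K ≃ₐ[k] K) (c : K) (r : R), φ σ (c • r) = σ c • φ σ r)
    {ι : Type} (b : Module.Basis ι K R) (g : K ≃ₐ[k] K) :
    ∃ c : Module.Basis ι K R, ∀ i, c i = φ g (b i) := by
  have hinv : ∀ r, φ g⁻¹ (φ g r) = r := by
    intro r
    have : (φ g⁻¹ * φ g) r = r := by rw [← map_mul]; simp
    exact this
  have hinv' : ∀ r, φ g (φ g⁻¹ r) = r := by
    intro r
    have : (φ g * φ g⁻¹) r = r := by rw [← map_mul]; simp
    exact this
  have hli : LinearIndependent K (fun i => φ g (b i)) := by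
    rw [linearIndependent_iff']
    intro s w hw i hi
    have h := congrArg (φ g⁻¹) hw
    simp only [map_sum, hsm, hinv, map_zero] at h
    have h3 := linearIndependent_iff'.1 b.linearIndependent s _ h i hi
    simpa using h3
  refine ⟨Module.Basis.mk hli ?_, fun i => Module.Basis.mk_apply _ _ i⟩
  intro r _
  rw [← hinv' r, ← b.linearCombination_repr (φ g⁻¹ r), Finsupp.linearCombination_apply,
    Finsupp.sum, map_sum]
  refine Submodule.sum_mem _ fun i _ => ?_
  rw [hsm]
  exact Submodule.smul_mem _ _ (Submodule.subset_span ⟨i, rfl⟩)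

theorem aux_conj {k K : Type} [Field k] [Field K] [Algebra k K]
    {R : Type} [CommRing R] (φ : (K ≃ₐ[k] K) →* (R ≃+* R))
    (L : IntermediateField k K) (r : R)
    (hr : ∀ g : K ≃ₐ[k] K, (∀ x ∈ L, g x = x) → φ g r = r) (s : K ≃ₐ[k] K)
    (g : K ≃ₐ[k] K) (hg : ∀ x ∈ L.map s.toAlgHom, g x = x) : φ g (φ s r) = φ s r := by
  have h := hr (s⁻¹ * g * s) (by
    intro x hx
    change s.symm (g (s x)) = x
    rw [hg (s x) ⟨x, hx, rfl⟩]
    simp)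
  have h2 : φ s (φ (s⁻¹ * g * s) r) = φ s r := by rw [h]
  have h3 : (φ s * φ (s⁻¹ * g * s)) r = φ s r := h2
  rw [← map_mul] at h3
  have h4 : s * (s⁻¹ * g * s) = g * s := by group
  rw [h4, map_mul] at h3
  exact h3

theorem aux_matrix {k K : Type} [Field k] [CharZero k] [IsAlgClosed k] [Field K] [IsAlgClosed K]
    [Algebra k K]
    (htr : ∀ L' : IntermediateField k K, L'.FG → ∃ x : K, Transcendental L' x)
    {R : Type} [CommRing R] [Algebra K R] (φ : (K ≃ₐ[k] K) →* (R ≃+* R))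
    (hsm : ∀ (σ : K ≃ₐ[k] K) (c : K) (r : R), φ σ (c • r) = σ c • φ σ r)
    {ι : Type} (L : IntermediateField k K) (hL : L.FG) (b : Module.Basis ι K R)
    (hb : ∀ i, ∀ g : K ≃ₐ[k] K, (∀ x ∈ L, g x = x) → φ g (b i) = b i) (σ τ : K ≃ₐ[k] K)
    (bσ : Module.Basis ι K R) (hσ : ∀ i, bσ i = φ σ (b i)) (i j : ι) :
    bσ.repr (φ τ (b i)) j ∈
      (L.map τ.toAlgHom).toSubalgebra ⊔ (L.map σ.toAlgHom).toSubalgebra := by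
  have hFG : ∀ g : K ≃ₐ[k] K, (L.map g.toAlgHom).FG := fun g => aux_mapFG L hL _
  obtain ⟨ρ, hρ⟩ := aux_rho htr (L.map τ.toAlgHom ⊔ L.map σ.toAlgHom) L
    (IntermediateField.fg_sup (hFG τ) (hFG σ)) hL
  obtain ⟨bρ, hbρ⟩ := aux_basis φ hsm b ρ
  have hrange : (ρ.toAlgHom.comp L.val).range = (L.map ρ.toAlgHom).toSubalgebra := by
    ext x
    constructor
    · rintro ⟨y, rfl⟩
      exact ⟨y, y.2, rfl⟩
    · rintro ⟨y, hy, rfl⟩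
      exact ⟨⟨y, hy⟩, rfl⟩
  -- entries of a change of basis matrix lie in the composite field
  have hent : ∀ (s t : K ≃ₐ[k] K) (c : Module.Basis ι K R) (_ : ∀ i, c i = φ s (b i)) (i l : ι),
      c.repr (φ t (b i)) l ∈ L.map t.toAlgHom ⊔ L.map s.toAlgHom := by
    intro s t c hc i l
    refine aux_coord htr φ hsm c _ (IntermediateField.fg_sup (hFG t) (hFG s)) ?_ _ ?_ l
    · intro l g hg
      rw [hc]
      exact aux_conj φ L _ (hb l) s g (fun x hx => hg x
        ((le_sup_right : L.map s.toAlgHom ≤ L.map t.toAlgHom ⊔ L.map s.toAlgHom) hx))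
    · intro g hg
      exact aux_conj φ L _ (hb i) t g (fun x hx => hg x
        ((le_sup_left : L.map t.toAlgHom ≤ L.map t.toAlgHom ⊔ L.map s.toAlgHom) hx))
  let p : ι → K := fun l => bρ.repr (φ τ (b i)) l
  let q : ι → K := fun l => bσ.repr (bρ l) j
  let T := (bρ.repr (φ τ (b i))).support
  have hpq : bσ.repr (φ τ (b i)) j = ∑ l ∈ T, p l * q l := by
    conv_lhs => rw [← bρ.linearCombination_repr (φ τ (b i))]
    rw [Finsupp.linearCombination_apply, Finsupp.sum, map_sum, Finsupp.finsetSum_apply]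
    refine Finset.sum_congr rfl fun l _ => ?_
    simp [p, q]
  obtain ⟨f, hf, hf0, hfp⟩ := aux_denom (L.map τ.toAlgHom) (L.map ρ.toAlgHom) p T
    (fun l _ => hent ρ τ bρ hbρ i l)
  obtain ⟨g, hg, hg0, hgq⟩ := aux_denom (L.map σ.toAlgHom) (L.map ρ.toAlgHom) q T
    (fun l _ => by
      have := hent σ ρ bσ hσ l j
      rw [sup_comm, ← hbρ] at this
      exact this)
  refine aux_key (ρ.toAlgHom.comp L.val) (L.map τ.toAlgHom) (L.map σ.toAlgHom) _ le_sup_left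
    le_sup_right (Module.Basis.ofVectorSpace k L) (hρ _ _) f g _ ?_ hf0 ?_ hg0
    (hent σ τ bσ hσ i j) ?_
  · rw [hrange]; exact hf
  · rw [hrange]; exact hg
  · rw [hrange, hpq, Finset.mul_sum]
    refine Subalgebra.sum_mem _ fun l hl => ?_
    have : f * g * (p l * q l) = (f * p l) * (g * q l) := by ring
    rw [this]
    exact mul_mem ((sup_le_sup_right le_sup_left _ : (L.map τ.toAlgHom).toSubalgebra ⊔
      (L.map ρ.toAlgHom).toSubalgebra ≤ _) (hfp l hl))
      ((sup_le_sup_right le_sup_right _ : (L.map σ.toAlgHom).toSubalgebra ⊔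
      (L.map ρ.toAlgHom).toSubalgebra ≤ _) (hgq l hl))


theorem aux_incl {k K : Type} [Field k] [CharZero k] [IsAlgClosed k] [Field K] [IsAlgClosed K]
    [Algebra k K]
    (htr : ∀ L' : IntermediateField k K, L'.FG → ∃ x : K, Transcendental L' x)
    {R : Type} [CommRing R] [Algebra K R] [Algebra k R] [IsScalarTower k K R]
    (φ : (K ≃ₐ[k] K) →* (R ≃+* R))
    (hsm : ∀ (σ : K ≃ₐ[k] K) (c : K) (r : R), φ σ (c • r) = σ c • φ σ r)
    (L : IntermediateField k K) (hL : L.FG) (R₁ : Set R)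
    (hR₁ : R₁ = {r : R | ∀ σ : K ≃ₐ[k] K, (∀ x ∈ L, σ x = x) → φ σ r = r})
    (hspan : Submodule.span K R₁ = ⊤) (σ τ : K ≃ₐ[k] K) :
    Algebra.adjoin k ((φ τ) '' R₁ ∪ algebraMap K R '' (σ '' (L : Set K))) ≤
      Algebra.adjoin k ((φ σ) '' R₁ ∪ algebraMap K R '' (τ '' (L : Set K))) := by
  have hmem : ∀ r, r ∈ R₁ ↔ ∀ σ : K ≃ₐ[k] K, (∀ x ∈ L, σ x = x) → φ σ r = r := by
    intro r; rw [hR₁]; rfl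
  have halg : ∀ (g : K ≃ₐ[k] K) (c : K), φ g (algebraMap K R c) = algebraMap K R (g c) := by
    intro g c
    rw [Algebra.algebraMap_eq_smul_one, hsm, map_one, Algebra.algebraMap_eq_smul_one]
  set A := Algebra.adjoin k ((φ σ) '' R₁ ∪ algebraMap K R '' (τ '' (L : Set K))) with hA
  have hAσ : ∀ c ∈ L, algebraMap K R (σ c) ∈ A := by
    intro c hc
    refine Algebra.subset_adjoin (Or.inl ⟨algebraMap K R c, ?_, halg σ c⟩)
    rw [hmem]
    intro g hg
    rw [halg, hg c hc]
  have hAτ : ∀ c ∈ L, algebraMap K R (τ c) ∈ A := fun c hc =>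
    Algebra.subset_adjoin (Or.inr ⟨τ c, ⟨c, hc, rfl⟩, rfl⟩)
  have hS : (L.map τ.toAlgHom).toSubalgebra ⊔ (L.map σ.toAlgHom).toSubalgebra ≤
      A.comap (IsScalarTower.toAlgHom k K R) := by
    refine sup_le ?_ ?_
    · rintro _ ⟨c, hc, rfl⟩
      exact hAτ c hc
    · rintro _ ⟨c, hc, rfl⟩
      exact hAσ c hc
  obtain ⟨t, htR, htspan, htli⟩ := exists_linearIndependent K R₁
  let b : Module.Basis t K R := Module.Basis.mk htli (by
    rw [Subtype.range_coe, htspan, hspan])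
  have hbR : ∀ i, b i ∈ R₁ := by
    intro i
    rw [Module.Basis.mk_apply]
    exact htR i.2
  have hb : ∀ i, ∀ g : K ≃ₐ[k] K, (∀ x ∈ L, g x = x) → φ g (b i) = b i :=
    fun i => (hmem _).1 (hbR i)
  obtain ⟨bσ, hbσ⟩ := aux_basis φ hsm b σ
  have hbτ : ∀ i, φ τ (b i) ∈ A := by
    intro i
    rw [← bσ.linearCombination_repr (φ τ (b i)), Finsupp.linearCombination_apply]
    refine Subalgebra.sum_mem _ fun j _ => ?_
    beta_reduce
    rw [Algebra.smul_def]
    refine mul_mem (hS (aux_matrix htr φ hsm L hL b hb σ τ bσ hbσ i j)) ?_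
    rw [hbσ]
    exact Algebra.subset_adjoin (Or.inl ⟨b j, hbR j, rfl⟩)
  rw [Algebra.adjoin_le_iff]
  rintro _ (⟨r, hr, rfl⟩ | ⟨_, ⟨c, hc, rfl⟩, rfl⟩)
  · rw [← b.linearCombination_repr r, Finsupp.linearCombination_apply, Finsupp.sum, map_sum]
    refine Subalgebra.sum_mem _ fun i _ => ?_
    rw [hsm, Algebra.smul_def]
    exact mul_mem (hAτ _ (aux_coord htr φ hsm b L hL hb r ((hmem r).1 hr) i)) (hbτ i)
  · exact hAσ c hc


end

/-- Equality of composite rings of conjugate invariants. -/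
theorem composite_rings_of_conjugate_invariants_eq
    (k K : Type) [Field k] [CharZero k] [IsAlgClosed k] [Field K] [IsAlgClosed K] [Algebra k K]
    -- `K` has infinite transcendence degree over `k`
    (htr : ∀ L' : IntermediateField k K, L'.FG → ∃ x : K, Transcendental L' x)
    (R : Type) [CommRing R] [Algebra K R] [Algebra k R] [IsScalarTower k K R]
    -- `R` is a finitely generated `K`-algebra
    (hfg : Algebra.FiniteType K R)
    -- a semilinear action of `Aut(K/k)` on `R`
    (φ : (K ≃ₐ[k] K) →* (R ≃+* R))
    (hsemi : ∀ (σ : K ≃ₐ[k] K) (c : K) (r : R),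
      φ σ (algebraMap K R c * r) = algebraMap K R (σ c) * φ σ r)
    -- continuity of the action
    (hcont : ∀ r : R, ∃ L' : IntermediateField k K, L'.FG ∧
      ∀ σ : K ≃ₐ[k] K, (∀ x ∈ L', σ x = x) → φ σ r = r)
    -- a finitely generated intermediate field `L` whose pointwise stabilizer has its fixed
    -- ring `R₁` spanning `R` over `K`
    (L : IntermediateField k K) (hL : L.FG)
    (R₁ : Set R)
    (hR₁ : R₁ = {r : R | ∀ σ : K ≃ₐ[k] K, (∀ x ∈ L, σ x = x) → φ σ r = r})
    (hspan : Submodule.span K R₁ = ⊤)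
    (σ τ : K ≃ₐ[k] K)
    -- `σ(L)` and `τ(L)` are linearly disjoint over `k`: the multiplication map
    -- `σ(L) ⊗[k] τ(L) → K` is injective
    (hdisj : Function.Injective
      (Subalgebra.mulMap (L.map σ.toAlgHom).toSubalgebra (L.map τ.toAlgHom).toSubalgebra)) :
    -- the composite rings `τ(R₁)·σ(L)` and `σ(R₁)·τ(L)` coincide
    Algebra.adjoin k ((φ τ) '' R₁ ∪ algebraMap K R '' (σ '' (L : Set K))) =
      Algebra.adjoin k ((φ σ) '' R₁ ∪ algebraMap K R '' (τ '' (L : Set K))) := by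
  have hsm : ∀ (σ : K ≃ₐ[k] K) (c : K) (r : R), φ σ (c • r) = σ c • φ σ r := by
    intro g c r
    rw [Algebra.smul_def, hsemi, Algebra.smul_def]
  exact le_antisymm (aux_incl htr φ hsm L hL R₁ hR₁ hspan σ τ)
    (aux_incl htr φ hsm L hL R₁ hR₁ hspan τ σ)
end

section
/- Invariants generate the function field: Let k be an algebraically closed field of characteristic zero and K an algebraically closed field extension of k of infinite transcendence degree over k. Let F be a field containing K that is finitely generated as a field extension of K, equipped with a continuous semilinear action of Aut(K/k) (an action of Aut(K/k) on F by ring automorphisms with σ(c·x) = σ(c)·σ(x) for all σ ∈ Aut(K/k), c ∈ K, x ∈ F, such that every x ∈ F is fixed by all σ ∈ Aut(K/k) fixing pointwise some intermediate field of K/k finitely generated over k). Then the fixed field M = { x ∈ F : σ(x) = x for all σ ∈ Aut(K/k) } generates F as a field extension of K, i.e., F = K(M). -/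
set_option linter.all false
open Cardinal in
theorem aux_equiv (L K1 K2 : Type) [Field L] [Field K1] [Field K2] [Algebra L K1] [Algebra L K2]
    [IsAlgClosed K1] [IsAlgClosed K2] (h : Algebra.trdeg L K1 = Algebra.trdeg L K2) :
    ∃ g : K1 ≃+* K2, ∀ x, g (algebraMap L K1 x) = algebraMap L K2 x := by
  obtain ⟨s, hs⟩ := exists_isTranscendenceBasis L K1
  obtain ⟨t, ht⟩ := exists_isTranscendenceBasis L K2
  rw [← hs.cardinalMk_eq_trdeg, ← ht.cardinalMk_eq_trdeg] at h
  obtain ⟨e⟩ := Cardinal.eq.1 h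
  let := IsAlgClosed.isAlgClosure_of_transcendence_basis _ hs
  let := IsAlgClosed.isAlgClosure_of_transcendence_basis _ ht
  let e' : Algebra.adjoin L (Set.range ((↑) : s → K1)) ≃ₐ[L]
      Algebra.adjoin L (Set.range ((↑) : t → K2)) :=
    hs.1.aevalEquiv.symm.trans ((MvPolynomial.renameEquiv L e).trans ht.1.aevalEquiv)
  let g := IsAlgClosure.equivOfEquiv K1 K2 e'.toRingEquiv
  refine ⟨g, fun r => ?_⟩
  have := IsAlgClosure.equivOfEquiv_algebraMap K1 K2 e'.toRingEquiv (algebraMap L _ r)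
  refine (this.trans ?_)
  show ((e' (algebraMap L _ r) : Algebra.adjoin L (Set.range ((↑) : t → K2))) : K2) = _
  rw [e'.commutes]
  rfl

theorem aux_ext_s9 (k L K : Type) [Field k] [Field L] [Field K] [Algebra k L] [Algebra k K]
    [IsAlgClosed K] (hL : Algebra.trdeg k L < Cardinal.aleph0) (i j : L →ₐ[k] K) :
    ∃ σ : K ≃ₐ[k] K, ∀ x, σ (i x) = j x := by
  have key : ∀ i : L →ₐ[k] K, Algebra.trdeg k L + @Algebra.trdeg L K _ _ i.toRingHom.toAlgebra =
      Algebra.trdeg k K := by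
    intro i
    letI := i.toRingHom.toAlgebra
    have : IsScalarTower k L K := IsScalarTower.of_algebraMap_eq fun x => (i.commutes x).symm
    have : FaithfulSMul L K := (faithfulSMul_iff_algebraMap_injective L K).2 i.toRingHom.injective
    have : FaithfulSMul k L := (faithfulSMul_iff_algebraMap_injective k L).2 (algebraMap k L).injective
    exact trdeg_add_eq k L
  have h := Cardinal.eq_of_add_eq_add_left ((key i).trans (key j).symm) hL
  obtain ⟨g, hg⟩ := @aux_equiv L K K _ _ _ i.toRingHom.toAlgebra j.toRingHom.toAlgebra _ _ h
  replace hg : ∀ x, g (i x) = j x := hg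
  refine ⟨AlgEquiv.ofRingEquiv (f := g) fun r => ?_, hg⟩
  rw [← i.commutes, hg, j.commutes, i.commutes]

theorem aux_extI (A K : Type) [Field A] [Field K] [Algebra A K] [IsAlgClosed K]
    {ι : Type} [Finite ι] (u v : ι → K) (hu : AlgebraicIndependent A u)
    (hv : AlgebraicIndependent A v) : ∃ σ : K ≃ₐ[A] K, ∀ i, σ (u i) = v i := by
  have hL : Algebra.trdeg A (FractionRing (MvPolynomial ι A)) < Cardinal.aleph0 := by
    have : Algebra.EssFiniteType A (FractionRing (MvPolynomial ι A)) :=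
      Algebra.EssFiniteType.comp A (MvPolynomial ι A) _
    have : FinTrdeg A (FractionRing (MvPolynomial ι A)) := inferInstance
    exact trdeg_lt_aleph0 _ _
  obtain ⟨σ, h⟩ := aux_ext_s9 A _ K hL
    ((IntermediateField.val _).comp hu.aevalEquivField.toAlgHom)
    ((IntermediateField.val _).comp hv.aevalEquivField.toAlgHom)
  refine ⟨σ, fun i => ?_⟩
  have := h (algebraMap (MvPolynomial ι A) _ (MvPolynomial.X i))
  simpa using this

theorem aux_extA (A K : Type) [Field A] [Field K] [Algebra A K] [IsAlgClosed K]
    (x y : K) (hx : IsIntegral A x) (hy : Polynomial.aeval y (minpoly A x) = 0) :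
    ∃ σ : K ≃ₐ[A] K, σ x = y := by
  have : FiniteDimensional A (IntermediateField.adjoin A {x}) :=
    IntermediateField.adjoin.finiteDimensional hx
  have hL : Algebra.trdeg A (IntermediateField.adjoin A {x}) < Cardinal.aleph0 := by
    rw [trdeg_eq_zero_iff.2 inferInstance]
    exact Cardinal.aleph0_pos
  have hy' : y ∈ (minpoly A x).aroots K := by
    rw [Polynomial.mem_aroots]; exact ⟨minpoly.ne_zero hx, hy⟩
  obtain ⟨σ, h⟩ := aux_ext_s9 A _ K hL (IntermediateField.val _)
    ((IntermediateField.algHomAdjoinIntegralEquiv A hx).symm ⟨y, hy'⟩)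
  refine ⟨σ, ?_⟩
  have := h (IntermediateField.AdjoinSimple.gen A x)
  rw [IntermediateField.algHomAdjoinIntegralEquiv_symm_apply_gen] at this
  simpa using this

theorem aux_fix (A K : Type) [Field A] [CharZero A] [Field K] [Algebra A K] [IsAlgClosed K]
    (x : K) (h : ∀ σ : K ≃ₐ[A] K, σ x = x) : x ∈ Set.range (algebraMap A K) := by
  by_cases hx : IsIntegral A x
  · have hsep : (minpoly A x).Separable := (minpoly.irreducible hx).separable
    have hsp : ((minpoly A x).map (algebraMap A K)).Splits := IsAlgClosed.splits _
    by_contra hne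
    have hdeg : (minpoly A x).natDegree ≠ 1 := by
      intro h1
      exact hne (minpoly.natDegree_eq_one_iff.1 h1)
    have hcard := Polynomial.card_rootSet_eq_natDegree hsep hsp
    have hsub : ∀ y ∈ (minpoly A x).rootSet K, y = x := by
      intro y hy
      obtain ⟨σ, hσ⟩ := aux_extA A K x y hx (Polynomial.aeval_eq_zero_of_mem_rootSet hy)
      rw [← hσ, h]
    apply hdeg
    apply le_antisymm
    · rw [← hcard]
      exact Fintype.card_le_one_iff.2 fun a b => Subtype.ext ((hsub a a.2).trans (hsub b b.2).symm)
    · exact minpoly.natDegree_pos hx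
  · exfalso
    have ht : Transcendental A x := fun h => hx h.isIntegral
    have ht' : Transcendental A (x + 1) := by
      intro h'
      apply ht
      have := h'.sub (isAlgebraic_one (R := A) (A := K))
      simpa using this
    obtain ⟨σ, hσ⟩ := aux_extI A K (ι := Unit) (fun _ => x) (fun _ => x + 1)
      (algebraicIndependent_unique_type_iff.2 ht) (algebraicIndependent_unique_type_iff.2 ht')
    have := hσ ()
    rw [h] at this
    simp at this


def AuxLI {F : Type} [Field F] (R : Subfield F) (s : Finset F) : Prop :=
  ∀ c : F → F, (∀ i ∈ s, c i ∈ R) → ∑ i ∈ s, c i * i = 0 → ∀ i ∈ s, c i = 0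

def AuxLD {F : Type} [Field F] (R E D : Subfield F) : Prop :=
  ∀ s : Finset F, (∀ x ∈ s, x ∈ E) → AuxLI R s → AuxLI D s

theorem AuxLI.mono {F : Type} [Field F] {R : Subfield F} {s t : Finset F} (h : AuxLI R t)
    (hst : s ⊆ t) : AuxLI R s := by
  classical
  intro c hc h0 i hi
  have := h (fun i => if i ∈ s then c i else 0)
    (fun i _ => by
      by_cases h : i ∈ s
      · simpa [h] using hc i h
      · simp [h, R.zero_mem])
    (by
      refine Eq.trans ?_ h0
      simp only [ite_mul, zero_mul]
      rw [← Finset.sum_filter, Finset.filter_mem_eq_inter, Finset.inter_eq_right.2 hst]) i (hst hi)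
  simpa [hi] using this

theorem aux_artin {F : Type} [Field F] (R D D' E : Subfield F) (H : Set (F ≃+* F))
    (hDD' : D ≤ D') (hV : ∀ τ ∈ H, ∀ v ∈ E, τ v = v)
    (hst : ∀ τ ∈ H, ∀ c ∈ D, τ c ∈ D')
    (hfix : ∀ c ∈ D, (∀ τ ∈ H, τ c = c) → c ∈ R)
    (hup : AuxLD D E D') : AuxLD R E D := by
  classical
  intro s
  induction s using Finset.induction_on with
  | empty => intro _ _ c _ _ i hi; simp at hi
  | insert e s hes ih =>
    intro hsE hR
    have hs : AuxLI D s := ih (fun x hx => hsE x (Finset.mem_insert_of_mem hx))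
      (hR.mono (Finset.subset_insert _ _))
    have hs' : AuxLI D' s := hup s (fun x hx => hsE x (Finset.mem_insert_of_mem hx)) hs
    intro c hc h0
    have hce : c e = 0 := by
      by_contra hce
      have hd : ∀ i ∈ s, c i / c e ∈ D := fun i hi =>
        D.div_mem (hc i (Finset.mem_insert_of_mem hi)) (hc e (Finset.mem_insert_self _ _))
      have h1 : e + ∑ i ∈ s, (c i / c e) * i = 0 := by
        rw [Finset.sum_insert hes] at h0
        have : c e * (e + ∑ i ∈ s, (c i / c e) * i) = 0 := by
          rw [mul_add, Finset.mul_sum, ← h0]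
          congr 1
          refine Finset.sum_congr rfl fun i _ => ?_
          field_simp
        exact (mul_eq_zero.1 this).resolve_left hce
      have h2 : ∀ i ∈ s, c i / c e ∈ R := by
        intro i hi
        refine hfix _ (hd i hi) fun τ hτ => ?_
        have h3 := congrArg τ h1
        rw [map_add, map_sum, map_zero, hV τ hτ e (hsE e (Finset.mem_insert_self _ _))] at h3
        have h4 : ∑ i ∈ s, (τ (c i / c e) - c i / c e) * i = 0 := by
          simp only [sub_mul, Finset.sum_sub_distrib]
          rw [sub_eq_zero]
          have : ∑ i ∈ s, τ (c i / c e * i) = ∑ i ∈ s, τ (c i / c e) * i := by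
            refine Finset.sum_congr rfl fun i hi => ?_
            rw [map_mul, hV τ hτ i (hsE i (Finset.mem_insert_of_mem hi))]
          rw [← this]
          exact add_left_cancel (h3.trans h1.symm)
        have := hs' _ (fun i hi => D'.sub_mem (hst τ hτ _ (hd i hi)) (hDD' (hd i hi))) h4 i hi
        exact sub_eq_zero.1 this
      have := hR (fun i => if i = e then 1 else c i / c e) (fun i hi => by
        by_cases h : i = e
        · simp [h, R.one_mem]
        · simpa [h] using h2 i (Finset.mem_of_mem_insert_of_ne hi h))
        (by
          rw [Finset.sum_insert hes]
          rw [← h1]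
          simp only [if_true, one_mul]
          congr 1
          refine Finset.sum_congr rfl fun i hi => ?_
          rw [if_neg (show i ≠ e from fun h => hes (h ▸ hi))]) e (Finset.mem_insert_self _ _)
      simp at this
    intro i hi
    by_cases hie : i = e
    · rw [hie, hce]
    · refine hs c (fun i hi => hc i (Finset.mem_insert_of_mem hi)) ?_ i
        (Finset.mem_of_mem_insert_of_ne hi hie)
      rw [Finset.sum_insert hes, hce, zero_mul, zero_add] at h0
      exact h0

theorem aux_LI_of {F : Type} [Field F] {R : Subfield F} {ι : Type} {v : ι → F}
    (hv : LinearIndependent R v) (s : Finset ι) : ∀ [DecidableEq F], AuxLI R (s.image v) := by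
  intro _ c hc h0 i hi
  classical
  obtain ⟨j, hj, rfl⟩ := Finset.mem_image.1 hi
  rw [Finset.sum_image fun a _ b _ h => hv.injective h] at h0
  have := linearIndependent_iff'.1 hv s
    (fun j => if h : c (v j) ∈ R then ⟨c (v j), h⟩ else 0) (by
      rw [← h0]
      refine Finset.sum_congr rfl fun j hj => ?_
      rw [dif_pos (hc _ (Finset.mem_image_of_mem _ hj))]
      rfl) j hj
  rw [dif_pos (hc _ (Finset.mem_image_of_mem _ hj))] at this
  exact congrArg Subtype.val this

theorem aux_LI_to {F : Type} [Field F] {R : Subfield F} {ι : Type} {v : ι → F}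
    (hinj : Function.Injective v)
    (h : ∀ [DecidableEq F], ∀ s : Finset ι, AuxLI R (s.image v)) : LinearIndependent R v := by
  classical
  rw [linearIndependent_iff']
  intro s g h0 i hi
  have := h s (fun x => if h : ∃ j, v j = x then (g h.choose : F) else 0)
    (fun x hx => by
      split_ifs with h
      · exact (g _).2
      · exact R.zero_mem)
    (by
      rw [Finset.sum_image fun a _ b _ h => hinj h, ← h0]
      refine Finset.sum_congr rfl fun j hj => ?_
      have hex : ∃ j', v j' = v j := ⟨j, rfl⟩
      rw [dif_pos hex, hinj hex.choose_spec]
      rfl) (v i) (Finset.mem_image_of_mem _ hi)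
  have hex : ∃ j', v j' = v i := ⟨i, rfl⟩
  rw [dif_pos hex, hinj hex.choose_spec] at this
  exact Subtype.ext this

theorem AuxLD.linearDisjoint {F : Type} [Field F] {R E D : Subfield F} (hRE : R ≤ E) (hRD : R ≤ D)
    (h : AuxLD R E D) :
    (Subfield.extendScalars hRE).LinearDisjoint (Subfield.extendScalars hRD) := by
  refine IntermediateField.LinearDisjoint.of_basis_left
    (Module.Basis.ofVectorSpace R (Subfield.extendScalars hRE)) ?_
  set b := Module.Basis.ofVectorSpace R (Subfield.extendScalars hRE)
  have hb : LinearIndependent R ((Subfield.extendScalars hRE).val ∘ b) :=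
    b.linearIndependent.map' (Subfield.extendScalars hRE).val.toLinearMap
      (LinearMap.ker_eq_bot.2 (Subfield.extendScalars hRE).val.injective)
  refine aux_LI_to (R := D) hb.injective fun s => ?_
  refine h _ (fun x hx => ?_) (aux_LI_of hb s)
  obtain ⟨j, hj, rfl⟩ := Finset.mem_image.1 hx
  exact (b j).2

/-- families in `D` independent over `R` are independent over `E` -/
theorem AuxLD.right {F : Type} [Field F] {R E D : Subfield F} (hRE : R ≤ E) (hRD : R ≤ D)
    (h : AuxLD R E D) {ι : Type} {v : ι → F} (hv : ∀ i, v i ∈ D) (hli : LinearIndependent R v) :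
    LinearIndependent E v := by
  have := (h.linearDisjoint hRE hRD).linearIndependent_right
    (b := fun i => (⟨v i, hv i⟩ : Subfield.extendScalars hRD))
    (LinearIndependent.of_comp (Subfield.extendScalars hRD).val.toLinearMap hli)
  exact this

theorem AuxLD.algInd {F : Type} [Field F] {R E D : Subfield F} (hRE : R ≤ E) (hRD : R ≤ D)
    (h : AuxLD R E D) {ι : Type} {w : ι → F} (hw : ∀ i, w i ∈ D) (hli : AlgebraicIndependent R w) :
    AlgebraicIndependent E w := by
  have h1 : LinearIndependent R (fun m : ι →₀ ℕ => m.prod fun i e => w i ^ e) := by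
    have := (MvPolynomial.basisMonomials ι R).linearIndependent.map'
      (MvPolynomial.aeval w).toLinearMap (LinearMap.ker_eq_bot.2 hli)
    have e : (fun m : ι →₀ ℕ => m.prod fun i e => w i ^ e) =
        (MvPolynomial.aeval w).toLinearMap ∘ (MvPolynomial.basisMonomials ι R) := by
      funext m
      simp [MvPolynomial.aeval_monomial]
    rw [e]
    exact this
  have h2 := h.right hRE hRD (fun m => by
    refine prod_mem fun i _ => pow_mem (hw i) _) h1
  rw [algebraicIndependent_iff]
  intro p hp
  rw [MvPolynomial.aeval_def, MvPolynomial.eval₂_eq] at hp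
  rw [linearIndependent_iff'] at h2
  have h3 := h2 p.support (fun m => p.coeff m) (by
    rw [← hp]
    rfl)
  ext m
  by_cases hm : m ∈ p.support
  · rw [h3 m hm]; simp
  · simpa using hm

theorem aux_modular {F : Type} [Field F] {R E D C : Subfield F} (hRC : R ≤ C) (hCE : C ≤ E)
    (hRD : R ≤ D) (h : AuxLD R E D) (hgen : E ≤ C ⊔ D) : E ≤ C := by
  have hRE := hRC.trans hCE
  set B := Module.Basis.ofVectorSpace R (Subfield.extendScalars hRD)
  set b : _ → F := (Subfield.extendScalars hRD).val ∘ B with hbdef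
  have hb : LinearIndependent R b :=
    B.linearIndependent.map' (Subfield.extendScalars hRD).val.toLinearMap
      (LinearMap.ker_eq_bot.2 (Subfield.extendScalars hRD).val.injective)
  have hbE : LinearIndependent E b := h.right hRE hRD (fun i => (B i).2) hb
  have hspan : ∀ d ∈ D, d ∈ Submodule.span C (Set.range b) := by
    intro d hd
    have h1 := B.mem_span (⟨d, hd⟩ : Subfield.extendScalars hRD)
    have h2 := Submodule.mem_map_of_mem (f := (Subfield.extendScalars hRD).val.toLinearMap) h1
    rw [Submodule.map_span, ← Set.range_comp] at h2
    have h3 : d ∈ Submodule.span R (Set.range b) := h2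
    refine Submodule.span_induction (fun x hx => Submodule.subset_span hx) (Submodule.zero_mem _)
      (fun x y _ _ hx hy => Submodule.add_mem _ hx hy) (fun a x _ hx => ?_) h3
    exact Submodule.smul_mem _ (⟨a, hRC a.2⟩ : C) hx
  have hadj : ∀ z ∈ Subring.closure ((C : Set F) ∪ D), z ∈ Submodule.span C (Set.range b) := by
    intro z hz
    have h1 : z ∈ Algebra.adjoin C (D : Set F) := by
      have : Subring.closure ((C : Set F) ∪ D) ≤ (Algebra.adjoin C (D : Set F)).toSubring := by
        rw [Subring.closure_le]
        rintro x (hx | hx)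
        · exact (Algebra.adjoin C (D : Set F)).algebraMap_mem ⟨x, hx⟩
        · exact Algebra.subset_adjoin hx
      exact this hz
    rw [← Subalgebra.mem_toSubmodule, Algebra.adjoin_eq_span] at h1
    have : (Submonoid.closure (D : Set F) : Set F) = D :=
      congrArg SetLike.coe (Submonoid.closure_eq D.toSubmonoid)
    rw [this] at h1
    exact Submodule.span_le.2 hspan h1
  intro y hy
  have hy' := hgen hy
  rw [← Subfield.closure_eq C, ← Subfield.closure_eq D, ← Subfield.closure_union,
    Subfield.mem_closure_iff] at hy'
  obtain ⟨p, hp, q, hq, hpq⟩ := hy'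
  by_cases hq0 : q = 0
  · rw [← hpq, hq0, div_zero]; exact C.zero_mem
  obtain ⟨l, hl⟩ := (Finsupp.mem_span_range_iff_exists_finsupp).1 (hadj _ hp)
  obtain ⟨l', hl'⟩ := (Finsupp.mem_span_range_iff_exists_finsupp).1 (hadj _ hq)
  classical
  have h1 : ∑ i ∈ l.support ∪ l'.support,
      ((⟨y, hy⟩ * ⟨l' i, hCE (l' i).2⟩ - ⟨l i, hCE (l i).2⟩ : E)) • b i = 0 := by
    have e1 : ∑ i ∈ l.support ∪ l'.support, (l i : F) * b i = p := by
      rw [← hl, Finsupp.sum_of_support_subset l Finset.subset_union_left _ (by simp)]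
      rfl
    have e2 : ∑ i ∈ l.support ∪ l'.support, (l' i : F) * b i = q := by
      rw [← hl', Finsupp.sum_of_support_subset l' Finset.subset_union_right _ (by simp)]
      rfl
    have e3 : y * q - p = 0 := by rw [← hpq]; field_simp; ring
    rw [← e3, ← e1, ← e2, Finset.mul_sum, ← Finset.sum_sub_distrib]
    refine Finset.sum_congr rfl fun i _ => ?_
    show (y * (l' i : F) - l i) * b i = _
    ring
  have h2 := linearIndependent_iff'.1 hbE _ _ h1
  have h3 : ∃ i, l' i ≠ 0 := by
    by_contra! hcon
    apply hq0
    rw [← hl']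
    simp [Finsupp.sum, hcon]
  obtain ⟨i, hi⟩ := h3
  have h4 := congrArg Subtype.val (h2 i (by simp [hi]))
  have h5 : y * (l' i : F) = l i := sub_eq_zero.1 h4
  have hi' : (l' i : F) ≠ 0 := fun h => hi (Subtype.ext h)
  rw [eq_div_of_mul_eq hi' h5]
  exact C.div_mem (l i).2 (l' i).2

theorem aux_denom_s9 {F : Type} [Field F] {ι : Type} (E1 : Subfield F) (w : ι → F) (s : Finset F)
    (c : F → F) (hc : ∀ i ∈ s, c i ∈ E1 ⊔ Subfield.closure (Set.range w)) :
    ∃ Q : F, Q ≠ 0 ∧ ∀ i ∈ s, ∃ P : MvPolynomial ι E1, MvPolynomial.aeval w P = c i * Q := by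
  classical
  have h1 : ∀ z ∈ Subring.closure ((E1 : Set F) ∪ Set.range w),
      ∃ P : MvPolynomial ι E1, MvPolynomial.aeval w P = z := by
    intro z hz
    have : Subring.closure ((E1 : Set F) ∪ Set.range w) ≤
        (MvPolynomial.aeval (R := E1) w).toRingHom.range := by
      rw [Subring.closure_le]
      rintro x (hx | ⟨i, rfl⟩)
      · exact ⟨MvPolynomial.C ⟨x, hx⟩, by simp; rfl⟩
      · exact ⟨MvPolynomial.X i, by simp⟩
    exact this hz
  have h2 : ∀ i ∈ s, ∃ P q : MvPolynomial ι E1, MvPolynomial.aeval w q ≠ 0 ∧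
      MvPolynomial.aeval w P = c i * MvPolynomial.aeval w q := by
    intro i hi
    have h3 := hc i hi
    rw [← Subfield.closure_eq E1, ← Subfield.closure_union, Subfield.mem_closure_iff] at h3
    obtain ⟨p, hp, q, hq, hpq⟩ := h3
    by_cases hq0 : q = 0
    · refine ⟨0, 1, by simp, ?_⟩
      rw [← hpq, hq0]; simp
    · obtain ⟨P, hP⟩ := h1 p hp
      obtain ⟨Q, hQ⟩ := h1 q hq
      refine ⟨P, Q, by rwa [hQ], ?_⟩
      rw [hP, hQ, ← hpq]; field_simp
  choose! P q hq hP using h2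
  refine ⟨∏ i ∈ s, MvPolynomial.aeval w (q i), Finset.prod_ne_zero_iff.2 hq, fun i hi =>
    ⟨P i * ∏ j ∈ s.erase i, q j, ?_⟩⟩
  rw [map_mul, hP i hi, map_prod, ← Finset.mul_prod_erase s _ hi, mul_assoc]

theorem aux_W {F : Type} [Field F] {ι : Type} {E0 E1 E01 E12 : Subfield F} (w : ι → F)
    (h0 : E0 ≤ E01) (h1 : E1 ≤ E01) (hw : AlgebraicIndependent E01 w)
    (h12 : E12 ≤ E1 ⊔ Subfield.closure (Set.range w)) : AuxLD E1 E0 E12 := by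
  classical
  intro s hs hli c hc hsum
  obtain ⟨Q, hQ, hP⟩ := aux_denom_s9 E1 w s c (fun i hi => h12 (hc i hi))
  choose! P hP using hP
  have hP0 : ∀ i ∈ s, P i = 0 := by
    let f : E1 →+* E01 := Subfield.inclusion h1
    let lf : F → E01 := fun i => if h : i ∈ E01 then ⟨i, h⟩ else 0
    have hlf : ∀ i ∈ s, (lf i : F) = i := fun i hi => by
      have : i ∈ E01 := h0 (hs i hi)
      simp [lf, this]
    have hT : (∑ i ∈ s, MvPolynomial.C (lf i) * (P i).map f : MvPolynomial ι E01) = 0 := by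
      apply (algebraicIndependent_iff.1 hw)
      rw [map_sum]
      have : ∀ i ∈ s, MvPolynomial.aeval w (MvPolynomial.C (lf i) * (P i).map f) =
          (c i * i) * Q := by
        intro i hi
        rw [map_mul, MvPolynomial.aeval_C]
        have e1 : MvPolynomial.aeval w ((P i).map f) = MvPolynomial.aeval w (P i) := by
          simp only [MvPolynomial.aeval_def, MvPolynomial.eval₂_map]
          rfl
        rw [e1, hP i hi]
        show (lf i : F) * _ = _
        rw [hlf i hi]; ring
      rw [Finset.sum_congr rfl this, ← Finset.sum_mul, hsum, zero_mul]
    have hcoef : ∀ m : ι →₀ ℕ, ∀ i ∈ s, (((P i).coeff m : E1) : F) = 0 := by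
      intro (m : ι →₀ ℕ)
      apply hli (fun i => (((P i).coeff m : E1) : F)) (fun i _ => ((P i).coeff m).2)
      have h3 := congrArg (fun T => ((MvPolynomial.coeff m T : E01) : F)) hT
      simp only [MvPolynomial.coeff_sum, MvPolynomial.coeff_C_mul, MvPolynomial.coeff_map,
        MvPolynomial.coeff_zero] at h3
      rw [← Subfield.coe_subtype, map_sum] at h3
      have h4 : (∑ i ∈ s, (((P i).coeff m : E1) : F) * i) = ∑ i ∈ s, E01.subtype (lf i * f ((P i).coeff m)) := by
        refine Finset.sum_congr rfl fun i hi => ?_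
        rw [map_mul]
        show _ = (lf i : F) * _
        rw [hlf i hi, mul_comm]
        rfl
      rw [h4, h3]; simp
    intro i hi
    ext m
    simpa using hcoef m i hi
  intro i hi
  have := hP i hi
  rw [hP0 i hi, map_zero] at this
  exact (mul_eq_zero.1 this.symm).resolve_right hQ

/-- invariants of the pointwise stabilizer of `S` -/
def auxE {k K F : Type} [Field k] [Field K] [Algebra k K] [Field F]
    (φ : (K ≃ₐ[k] K) →* (F ≃+* F)) (S : Set K) : Subfield F where
  carrier := {x | ∀ σ : K ≃ₐ[k] K, (∀ a ∈ S, σ a = a) → φ σ x = x}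
  mul_mem' ha hb σ hσ := by rw [map_mul, ha σ hσ, hb σ hσ]
  one_mem' σ hσ := map_one _
  add_mem' ha hb σ hσ := by rw [map_add, ha σ hσ, hb σ hσ]
  zero_mem' σ hσ := map_zero _
  neg_mem' ha σ hσ := by rw [map_neg, ha σ hσ]
  inv_mem' x ha σ hσ := by rw [map_inv₀, ha σ hσ]

def auxk (k : Type) {K : Type} (F : Type) [Field k] [Field K] [Algebra k K] [Field F] [Algebra K F]
    (S : Set K) : Subfield F :=
  (IntermediateField.adjoin k S).toSubfield.map (algebraMap K F)

theorem auxk_le_KK {k K F : Type} [Field k] [Field K] [Algebra k K] [Field F] [Algebra K F]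
    (S : Set K) : auxk k F S ≤ (algebraMap K F).fieldRange := by
  rintro _ ⟨x, _, rfl⟩
  exact ⟨x, rfl⟩

theorem aux_fix_adjoin {k K : Type} [Field k] [Field K] [Algebra k K] (S : Set K)
    (σ : K ≃ₐ[k] K) (hσ : ∀ a ∈ S, σ a = a) :
    ∀ x ∈ IntermediateField.adjoin k S, σ x = x := by
  intro x hx
  induction hx using IntermediateField.adjoin_induction with
  | mem x hx => exact hσ x hx
  | algebraMap x => exact σ.commutes x
  | add x y _ _ hx hy => rw [map_add, hx, hy]
  | inv x _ hx => rw [map_inv₀, hx]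
  | mul x y _ _ hx hy => rw [map_mul, hx, hy]

theorem auxk_le {k K F : Type} [Field k] [Field K] [Algebra k K] [Field F] [Algebra K F]
    (S : Set K) (X : Subfield F) (h0 : ∀ a : k, algebraMap K F (algebraMap k K a) ∈ X)
    (h1 : ∀ a ∈ S, algebraMap K F a ∈ X) : auxk k F S ≤ X := by
  rintro _ ⟨x, hx0, rfl⟩
  have hx : x ∈ IntermediateField.adjoin k S := hx0
  clear hx0
  induction hx using IntermediateField.adjoin_induction with
  | mem x hx => exact h1 x hx
  | algebraMap x => exact h0 x
  | add x y _ _ hx hy => rw [map_add]; exact X.add_mem hx hy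
  | inv x _ hx => rw [map_inv₀]; exact X.inv_mem hx
  | mul x y _ _ hx hy => rw [map_mul]; exact X.mul_mem hx hy

theorem auxE_mono {k K F : Type} [Field k] [Field K] [Algebra k K] [Field F]
    (φ : (K ≃ₐ[k] K) →* (F ≃+* F)) {S T : Set K} (h : S ⊆ T) : auxE φ S ≤ auxE φ T :=
  fun x hx σ hσ => hx σ fun a ha => hσ a (h ha)

section
variable {k K F : Type} [Field k] [CharZero k] [Field K] [IsAlgClosed K] [Algebra k K] [Field F]
  [Algebra K F] (φ : (K ≃ₐ[k] K) →* (F ≃+* F))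
  (hφ : ∀ (σ : K ≃ₐ[k] K) (c : K), φ σ (algebraMap K F c) = algebraMap K F (σ c))

theorem auxE_coe
    (hφ : ∀ (σ : K ≃ₐ[k] K) (c : K), φ σ (algebraMap K F c) = algebraMap K F (σ c))
    {S : Set K} {a : K} (ha : a ∈ S) :
    algebraMap K F a ∈ auxE φ S := fun σ hσ => by rw [hφ, hσ a ha]

theorem auxE_k
    (hφ : ∀ (σ : K ≃ₐ[k] K) (c : K), φ σ (algebraMap K F c) = algebraMap K F (σ c))
    {S : Set K} (a : k) :
    algebraMap K F (algebraMap k K a) ∈ auxE φ S := fun σ hσ => by rw [hφ, σ.commutes]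

theorem auxk_le_auxE
    (hφ : ∀ (σ : K ≃ₐ[k] K) (c : K), φ σ (algebraMap K F c) = algebraMap K F (σ c))
    (S : Set K) : auxk k F S ≤ auxE φ S :=
  auxk_le S _ (auxE_k φ hφ) fun _ ha => auxE_coe φ hφ ha

theorem auxE_LD
    (hφ : ∀ (σ : K ≃ₐ[k] K) (c : K), φ σ (algebraMap K F c) = algebraMap K F (σ c))
    (S : Set K) : AuxLD (auxk k F S) (auxE φ S) (algebraMap K F).fieldRange := by
  refine aux_artin _ _ _ _ {τ | ∃ σ : K ≃ₐ[k] K, (∀ a ∈ S, σ a = a) ∧ τ = φ σ} le_rfl ?_ ?_ ?_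
    (fun s _ h => h)
  · rintro _ ⟨σ, hσ, rfl⟩ v hv
    exact hv σ hσ
  · rintro _ ⟨σ, hσ, rfl⟩ _ ⟨c, rfl⟩
    rw [hφ]; exact ⟨_, rfl⟩
  · rintro _ ⟨c, rfl⟩ h
    have : CharZero (IntermediateField.adjoin k S) := charZero_of_injective_algebraMap
      (algebraMap k (IntermediateField.adjoin k S)).injective
    obtain ⟨y, hy⟩ := aux_fix (IntermediateField.adjoin k S) K c (fun σ => by
      have := h (φ (σ.restrictScalars k)) ⟨σ.restrictScalars k, fun a ha =>
        σ.commutes (⟨a, IntermediateField.subset_adjoin k S ha⟩ : IntermediateField.adjoin k S), rfl⟩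
      rw [hφ] at this
      exact (algebraMap K F).injective this)
    exact ⟨y, y.2, by rw [← hy]; rfl⟩

theorem auxE_transport {S T : Set K} (σ : K ≃ₐ[k] K) (h : ∀ a ∈ S, σ a ∈ T) {x : F}
    (hx : x ∈ auxE φ S) : φ σ x ∈ auxE φ T := by
  intro τ hτ
  have h1 : φ (σ⁻¹ * τ * σ) x = x := hx _ fun a ha => by
    show σ.symm (τ (σ a)) = a
    rw [hτ _ (h a ha), σ.symm_apply_apply]
  have h2 : τ * σ = σ * (σ⁻¹ * τ * σ) := by group
  have h3 : φ τ (φ σ x) = φ (τ * σ) x := by rw [map_mul]; rfl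
  rw [h3, h2, map_mul]
  show φ σ (φ (σ⁻¹ * τ * σ) x) = _
  rw [h1]

theorem aux_gen_transport
    (hφ : ∀ (σ : K ≃ₐ[k] K) (c : K), φ σ (algebraMap K F c) = algebraMap K F (σ c))
    {S T : Set K} (σ : K ≃ₐ[k] K) (h : ∀ a ∈ S, σ a ∈ T)
    (hgen : (algebraMap K F).fieldRange ⊔ auxE φ S = ⊤) :
    (algebraMap K F).fieldRange ⊔ auxE φ T = ⊤ := by
  have h1 : (algebraMap K F).fieldRange ⊔ auxE φ S ≤
      ((algebraMap K F).fieldRange ⊔ auxE φ T).comap (φ σ : F →+* F) := by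
    refine sup_le ?_ ?_
    · rintro _ ⟨c, rfl⟩
      show φ σ (algebraMap K F c) ∈ (algebraMap K F).fieldRange ⊔ auxE φ T
      rw [hφ]
      exact (le_sup_left : (algebraMap K F).fieldRange ≤ _) ⟨_, rfl⟩
    · intro x hx
      exact (le_sup_right : auxE φ T ≤ _) (auxE_transport φ σ h hx)
  rw [eq_top_iff]
  intro x _
  obtain ⟨y, rfl⟩ := (φ σ).surjective x
  exact h1 (hgen ▸ Subfield.mem_top y)

theorem auxE_le
    (hφ : ∀ (σ : K ≃ₐ[k] K) (c : K), φ σ (algebraMap K F c) = algebraMap K F (σ c))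
    {ι : Type} {T : Set K} (w : ι → K)
    (hgen : (algebraMap K F).fieldRange ⊔ auxE φ T = ⊤) :
    auxE φ (T ∪ Set.range w) ≤ auxE φ T ⊔ Subfield.closure (Set.range (algebraMap K F ∘ w)) := by
  have h1 : auxE φ (T ∪ Set.range w) ≤ auxk k F (T ∪ Set.range w) ⊔ auxE φ T := by
    refine aux_modular (R := auxk k F (T ∪ Set.range w)) le_sup_left
      (sup_le (auxk_le_auxE φ hφ _) (auxE_mono φ Set.subset_union_left)) (auxk_le_KK _)
      (auxE_LD φ hφ _) ?_
    rw [sup_assoc, sup_comm (auxE φ T), hgen, sup_top_eq]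
    exact le_top
  refine h1.trans (sup_le ?_ le_sup_left)
  refine auxk_le _ _ (fun a => (le_sup_left : auxE φ T ≤ _) (auxE_k φ hφ a)) ?_
  rintro a (ha | ⟨i, rfl⟩)
  · exact (le_sup_left : auxE φ T ≤ _) (auxE_coe φ hφ ha)
  · exact (le_sup_right : Subfield.closure _ ≤ auxE φ T ⊔ _) (Subfield.subset_closure ⟨i, rfl⟩)

theorem auxE_algInd
    (hφ : ∀ (σ : K ≃ₐ[k] K) (c : K), φ σ (algebraMap K F c) = algebraMap K F (σ c))
    {ι : Type} {S : Set K} (w : ι → K)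
    (hw : AlgebraicIndependent (IntermediateField.adjoin k S) w) :
    AlgebraicIndependent (auxE φ S) (algebraMap K F ∘ w) := by
  refine (auxE_LD φ hφ S).algInd (auxk_le_auxE φ hφ S) (auxk_le_KK S) (fun i => ⟨_, rfl⟩) ?_
  let f : IntermediateField.adjoin k S →+* auxk k F S :=
    { toFun := fun x => ⟨algebraMap K F x, ⟨x, x.2, rfl⟩⟩
      map_one' := Subtype.ext (map_one _)
      map_zero' := Subtype.ext (map_zero _)
      map_mul' := fun x y => Subtype.ext (map_mul (algebraMap K F) _ _)
      map_add' := fun x y => Subtype.ext (map_add (algebraMap K F) _ _) }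
  refine hw.ringHom_of_comp_eq f (algebraMap K F) ?_ (algebraMap K F).injective ?_
  · rintro ⟨_, x, hx, rfl⟩
    exact ⟨⟨x, hx⟩, rfl⟩
  · ext x
    rfl
end

theorem aux_restr {k K ι : Type} [Field k] [Field K] [Algebra k K] {S T : Set K} (h : S ⊆ T)
    {w : ι → K} (hw : AlgebraicIndependent (IntermediateField.adjoin k T) w) :
    AlgebraicIndependent (IntermediateField.adjoin k S) w := by
  letI := (IntermediateField.inclusion (IntermediateField.adjoin.mono k S T h)).toRingHom.toAlgebra
  have : IsScalarTower (IntermediateField.adjoin k S) (IntermediateField.adjoin k T) K :=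
    IsScalarTower.of_algebraMap_eq fun x => rfl
  exact hw.restrictScalars (RingHom.injective _)

theorem aux_restr_k {k K ι : Type} [Field k] [Field K] [Algebra k K] {T : Set K}
    {w : ι → K} (hw : AlgebraicIndependent (IntermediateField.adjoin k T) w) :
    AlgebraicIndependent k w :=
  hw.restrictScalars (RingHom.injective _)

theorem aux_generic {k K : Type} [Field k] [Field K] [Algebra k K]
    (htr : ∀ L : IntermediateField k K, L.FG → ∃ x : K, Transcendental L x)
    {T : Set K} (hT : T.Finite) (ι : Type) [Finite ι] :
    ∃ w : ι → K, AlgebraicIndependent (IntermediateField.adjoin k T) w := by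
  obtain ⟨s, hs⟩ := exists_isTranscendenceBasis (IntermediateField.adjoin k T) K
  have hinf : Infinite s := by
    by_contra hfin
    rw [not_infinite_iff_finite] at hfin
    have halg := hs.isAlgebraic_field
    rw [Subtype.range_coe] at halg
    have hfg : (IntermediateField.adjoin k (T ∪ s)).FG :=
      IntermediateField.fg_adjoin_of_finite (hT.union (Set.toFinite s))
    obtain ⟨x, hx⟩ := htr _ hfg
    rw [← IntermediateField.adjoin_adjoin_left] at hx
    exact hx (halg.isAlgebraic x)
  obtain ⟨n, ⟨e⟩⟩ := Finite.exists_equiv_fin ι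
  let f : ι → s := fun i => Infinite.natEmbedding s (e i)
  have hf : Function.Injective f := fun i j h => by
    have := (Infinite.natEmbedding s).injective h
    exact e.injective (Fin.ext this)
  exact ⟨_, hs.1.comp f hf⟩

theorem aux_range_adj {k K ι : Type} [Field k] [Field K] [Algebra k K] (u : ι → K) :
    Set.range u ⊆ Set.range (algebraMap (IntermediateField.adjoin k (Set.range u)) K) := by
  rintro _ ⟨i, rfl⟩
  exact ⟨⟨u i, IntermediateField.subset_adjoin k _ ⟨i, rfl⟩⟩, rfl⟩

/-- Move `v` to `w` fixing `range u`. -/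
theorem aux_move {k K ι ι' : Type} [Field k] [Field K] [IsAlgClosed K] [Algebra k K] [Finite ι]
    (S : Set K) (v w : ι → K) (hv : AlgebraicIndependent (IntermediateField.adjoin k S) v)
    (hw : AlgebraicIndependent (IntermediateField.adjoin k S) w) :
    ∃ σ : K ≃ₐ[k] K, (∀ a ∈ S, σ a = a) ∧ ∀ i, σ (v i) = w i := by
  obtain ⟨σ, h⟩ := aux_extI _ K v w hv hw
  exact ⟨σ.restrictScalars k, fun a ha =>
    σ.commutes (⟨a, IntermediateField.subset_adjoin k S ha⟩ : IntermediateField.adjoin k S), h⟩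

section
variable {k K F : Type} [Field k] [CharZero k] [Field K] [IsAlgClosed K] [Algebra k K] [Field F]
  [Algebra K F] (φ : (K ≃ₐ[k] K) →* (F ≃+* F))

theorem aux_step5 
    (htr : ∀ L : IntermediateField k K, L.FG → ∃ x : K, Transcendental L x)
    {ι : Type} [Finite ι] (u1 u2 : ι → K) (h1 : AlgebraicIndependent k u1)
    (h2 : AlgebraicIndependent (IntermediateField.adjoin k (Set.range u1)) u2)
    (c : F) (hc1 : c ∈ auxE φ (Set.range u1)) (hc2 : c ∈ auxE φ (Set.range u2)) :
    c ∈ auxE φ ∅ := by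
  intro g _
  obtain ⟨u3, h3⟩ := aux_generic htr
    ((Set.finite_range u1).union (Set.finite_range (g ∘ u1))) ι
  obtain ⟨τ, hτ1, hτ2⟩ := aux_move (ι' := ι) _ u2 u3 h2 (aux_restr Set.subset_union_left h3)
  have hc3 : c ∈ auxE φ (Set.range u3) := by
    rw [← hc1 τ hτ1]
    refine auxE_transport φ τ ?_ hc2
    rintro _ ⟨i, rfl⟩
    exact ⟨i, (hτ2 i).symm⟩
  have hg1 : AlgebraicIndependent k (g ∘ u1) := h1.map' (f := (g : K →ₐ[k] K)) g.injective
  have ha := h1.sumElim_of_tower (aux_range_adj u1)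
    (aux_restr (k := k) Set.subset_union_left h3)
  have hb := hg1.sumElim_of_tower (aux_range_adj (g ∘ u1))
    (aux_restr (k := k) Set.subset_union_right h3)
  obtain ⟨h, hh⟩ := aux_extI k K _ _ ha hb
  have e1 : φ h c = c := hc3 h (by
    rintro _ ⟨i, rfl⟩
    exact hh (Sum.inl i))
  have e2 : φ (g⁻¹ * h) c = c := hc1 _ (by
    rintro _ ⟨i, rfl⟩
    have : h (u1 i) = g (u1 i) := hh (Sum.inr i)
    show g.symm (h (u1 i)) = u1 i
    rw [this, g.symm_apply_apply])
  have e3 : φ (g * (g⁻¹ * h)) c = φ g c := by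
    rw [map_mul]
    show φ g (φ (g⁻¹ * h) c) = _
    rw [e2]
  rw [← e3, mul_inv_cancel_left, e1]

theorem aux_final
    (htr : ∀ L : IntermediateField k K, L.FG → ∃ x : K, Transcendental L x)
    (hφ : ∀ (σ : K ≃ₐ[k] K) (c : K), φ σ (algebraMap K F c) = algebraMap K F (σ c))
    {ι : Type} [Finite ι] (u0 : ι → K) (hu0 : AlgebraicIndependent k u0)
    (hgen : (algebraMap K F).fieldRange ⊔ auxE φ (Set.range u0) = ⊤) :
    (algebraMap K F).fieldRange ⊔ auxE φ ∅ = ⊤ := by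
  obtain ⟨u1, hu1⟩ := aux_generic htr (Set.finite_range u0) ι
  obtain ⟨u2, hu2⟩ := aux_generic htr ((Set.finite_range u0).union (Set.finite_range u1)) ι
  obtain ⟨σ, hσ⟩ := aux_extI k K u0 u1 hu0 (aux_restr_k hu1)
  have hgen1 : (algebraMap K F).fieldRange ⊔ auxE φ (Set.range u1) = ⊤ := by
    refine aux_gen_transport φ hφ σ ?_ hgen
    rintro _ ⟨i, rfl⟩
    exact ⟨i, (hσ i).symm⟩
  have hW : AuxLD (auxE φ (Set.range u1)) (auxE φ (Set.range u0))
      (auxE φ (Set.range u1 ∪ Set.range u2)) :=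
    aux_W (algebraMap K F ∘ u2) (auxE_mono φ Set.subset_union_left)
      (auxE_mono φ Set.subset_union_right) (auxE_algInd φ hφ u2 hu2) (auxE_le φ hφ u2 hgen1)
  obtain ⟨τ, hτ0, hτ1⟩ := aux_move (ι' := ι) (Set.range u0) u1 u2 hu1
    (aux_restr Set.subset_union_left hu2)
  have hst : ∀ c ∈ auxE φ (Set.range u1), φ τ c ∈ auxE φ (Set.range u2) := fun c hc => by
    refine auxE_transport φ τ ?_ hc
    rintro _ ⟨i, rfl⟩
    exact ⟨i, (hτ1 i).symm⟩
  have hL6 : AuxLD (auxE φ ∅) (auxE φ (Set.range u0)) (auxE φ (Set.range u1)) := by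
    refine aux_artin _ _ _ _ {φ τ} (auxE_mono φ Set.subset_union_left) ?_ ?_ ?_ hW
    · rintro _ rfl v hv
      exact hv τ hτ0
    · rintro _ rfl c hc
      exact auxE_mono φ Set.subset_union_right (hst c hc)
    · intro c hc h
      refine aux_step5 φ htr u1 u2 (aux_restr_k hu1) (aux_restr Set.subset_union_right hu2) c hc ?_
      rw [← h _ rfl]
      exact hst c hc
  have hcl : Subfield.closure (Set.range (algebraMap K F ∘ u0)) ≤ auxE φ (Set.range u0) := by
    rw [Subfield.closure_le]
    rintro _ ⟨i, rfl⟩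
    exact auxE_coe φ hφ ⟨i, rfl⟩
  have hclK : Subfield.closure (Set.range (algebraMap K F ∘ u0)) ≤ (algebraMap K F).fieldRange := by
    rw [Subfield.closure_le]
    rintro _ ⟨i, rfl⟩
    exact ⟨_, rfl⟩
  have hfin : auxE φ (Set.range u0) ≤
      auxE φ ∅ ⊔ Subfield.closure (Set.range (algebraMap K F ∘ u0)) := by
    refine aux_modular le_sup_left (sup_le (auxE_mono φ (Set.empty_subset _)) hcl)
      (auxE_mono φ (Set.empty_subset _)) hL6 ?_
    refine ((auxE_mono φ Set.subset_union_right).trans (auxE_le φ hφ u0 hgen1)).trans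
      (sup_le le_sup_right (le_sup_right.trans le_sup_left))
  rw [eq_top_iff, ← hgen]
  exact sup_le le_sup_left (hfin.trans (sup_le le_sup_right (hclK.trans le_sup_left)))
end

section
variable {k K F : Type} [Field k] [CharZero k] [Field K] [IsAlgClosed K] [Algebra k K] [Field F]
  [Algebra K F] (φ : (K ≃ₐ[k] K) →* (F ≃+* F))

open Polynomial in
theorem aux_desc
    (hφ : ∀ (σ : K ≃ₐ[k] K) (c : K), φ σ (algebraMap K F c) = algebraMap K F (σ c))
    (S : Set K) (θ : K) (hθ : IsIntegral (IntermediateField.adjoin k S) θ) (x : F)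
    (hx : ∀ σ : K ≃ₐ[k] K, (∀ a ∈ S, σ a = a) → σ θ = θ → φ σ x = x) :
    x ∈ (algebraMap K F).fieldRange ⊔ auxE φ S := by
  classical
  let A := IntermediateField.adjoin k S
  let R : Finset K := ((minpoly A θ).aroots K).toFinset
  have hR : ∀ ρ, ρ ∈ R ↔ aeval ρ (minpoly A θ) = 0 := fun ρ => by
    simp only [R, Multiset.mem_toFinset, mem_aroots]
    exact and_iff_right (minpoly.ne_zero hθ)
  have hθR : θ ∈ R := (hR θ).2 (minpoly.aeval _ _)
  have hex : ∀ ρ ∈ R, ∃ γ : K ≃ₐ[k] K, (∀ a ∈ S, γ a = a) ∧ γ θ = ρ := by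
    intro ρ hρ
    obtain ⟨σ, h⟩ := aux_extA A K θ ρ hθ ((hR ρ).1 hρ)
    exact ⟨σ.restrictScalars k, fun a ha =>
      σ.commutes (⟨a, IntermediateField.subset_adjoin k S ha⟩ : IntermediateField.adjoin k S), h⟩
  have hσR : ∀ σ : K ≃ₐ[k] K, (∀ a ∈ S, σ a = a) → ∀ ρ ∈ R, σ ρ ∈ R := by
    intro σ hσ ρ hρ
    let σ' : K ≃ₐ[A] K := AlgEquiv.ofRingEquiv (f := σ.toRingEquiv)
      fun r => aux_fix_adjoin S σ hσ r r.2
    have := (hR ρ).1 hρ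
    rw [hR]
    have h2 := aeval_algHom_apply (σ' : K →ₐ[A] K) ρ (minpoly A θ)
    rw [this, map_zero] at h2
    exact h2
  choose! γ hγ1 hγ2 using hex
  let X : K → F := fun ρ => φ (γ ρ) x
  have hX : ∀ σ : K ≃ₐ[k] K, (∀ a ∈ S, σ a = a) → ∀ ρ ∈ R, φ σ (X ρ) = X (σ ρ) := by
    intro σ hσ ρ hρ
    have h1 := hσR σ hσ ρ hρ
    have e : φ ((γ (σ ρ))⁻¹ * (σ * γ ρ)) x = x := hx _
      (fun a ha => by
        show (γ (σ ρ)).symm (σ (γ ρ a)) = a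
        rw [hγ1 ρ hρ a ha, hσ a ha, AlgEquiv.symm_apply_eq, hγ1 _ h1 a ha])
      (by
        show (γ (σ ρ)).symm (σ (γ ρ θ)) = θ
        rw [hγ2 ρ hρ, AlgEquiv.symm_apply_eq, hγ2 _ h1])
    have e2 : φ (γ (σ ρ) * ((γ (σ ρ))⁻¹ * (σ * γ ρ))) x = X (σ ρ) := by
      rw [map_mul]
      show φ (γ (σ ρ)) (φ ((γ (σ ρ))⁻¹ * (σ * γ ρ)) x) = _
      rw [e]
    rw [← e2, mul_inv_cancel_left, map_mul]
    rfl
  let t : ℕ → F := fun j => ∑ ρ ∈ R, algebraMap K F (ρ ^ j) * X ρ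
  have ht : ∀ j, t j ∈ auxE φ S := by
    intro j σ hσ
    have hσ' : ∀ a ∈ S, σ.symm a = a := fun a ha => by
      rw [AlgEquiv.symm_apply_eq, hσ a ha]
    show φ σ (∑ ρ ∈ R, algebraMap K F (ρ ^ j) * X ρ) = ∑ ρ ∈ R, algebraMap K F (ρ ^ j) * X ρ
    rw [map_sum]
    refine Finset.sum_bij (fun ρ _ => σ ρ) (fun ρ hρ => hσR σ hσ ρ hρ)
      (fun a _ b _ h => σ.injective h)
      (fun b hb => ⟨σ.symm b, hσR σ.symm hσ' b hb, σ.apply_symm_apply b⟩) ?_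
    intro ρ hρ
    rw [map_mul, hφ, hX σ hσ ρ hρ, map_pow]
  let Q : K[X] := ∏ ρ ∈ R.erase θ, (Polynomial.X - C ρ)
  have hQ1 : ∀ ρ ∈ R, ρ ≠ θ → Q.eval ρ = 0 := by
    intro ρ hρ hne
    simp only [Q, eval_prod]
    exact Finset.prod_eq_zero (Finset.mem_erase.2 ⟨hne, hρ⟩) (by simp)
  have hQ2 : Q.eval θ ≠ 0 := by
    simp only [Q, eval_prod]
    refine Finset.prod_ne_zero_iff.2 fun ρ hρ => ?_
    simpa [sub_eq_zero] using (Finset.ne_of_mem_erase hρ).symm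
  have hXθ : X θ = x := hx _ (hγ1 θ hθR) (hγ2 θ hθR)
  have hsum : ∑ j ∈ Finset.range (Q.natDegree + 1), algebraMap K F (Q.coeff j) * t j =
      algebraMap K F (Q.eval θ) * x := by
    have h1 : ∑ j ∈ Finset.range (Q.natDegree + 1), algebraMap K F (Q.coeff j) * t j =
        ∑ ρ ∈ R, algebraMap K F (Q.eval ρ) * X ρ := by
      simp only [t, Finset.mul_sum]
      rw [Finset.sum_comm]
      refine Finset.sum_congr rfl fun ρ _ => ?_
      rw [eval_eq_sum_range, map_sum, Finset.sum_mul]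
      refine Finset.sum_congr rfl fun j _ => ?_
      rw [map_mul, mul_assoc]
    rw [h1, Finset.sum_eq_single_of_mem θ hθR, hXθ]
    intro ρ hρ hne
    rw [hQ1 ρ hρ hne, map_zero, zero_mul]
  have hKm : ∀ c : K, algebraMap K F c ∈ (algebraMap K F).fieldRange ⊔ auxE φ S := fun c =>
    (le_sup_left : (algebraMap K F).fieldRange ≤ _) ⟨c, rfl⟩
  have hne : algebraMap K F (Q.eval θ) ≠ 0 := by simpa using hQ2
  have hx' : x = (∑ j ∈ Finset.range (Q.natDegree + 1), algebraMap K F (Q.coeff j) * t j) /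
      algebraMap K F (Q.eval θ) := by
    rw [hsum, mul_div_cancel_left₀ _ hne]
  rw [hx']
  refine Subfield.div_mem _ (Subfield.sum_mem _ fun j _ => Subfield.mul_mem _ (hKm _)
    ((le_sup_right : auxE φ S ≤ _) (ht j))) (hKm _)

theorem aux_step2
    (hfg : ∃ s : Finset F, IntermediateField.adjoin K (s : Set F) = ⊤)
    (hφ : ∀ (σ : K ≃ₐ[k] K) (c : K), φ σ (algebraMap K F c) = algebraMap K F (σ c))
    (hcont : ∀ x : F, ∃ L : IntermediateField k K, L.FG ∧
      ∀ σ : K ≃ₐ[k] K, (∀ y ∈ L, σ y = y) → φ σ x = x) :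
    ∃ u : Set K, u.Finite ∧ AlgebraicIndependent k ((↑) : u → K) ∧
      (algebraMap K F).fieldRange ⊔ auxE φ u = ⊤ := by
  classical
  obtain ⟨s, hs⟩ := hfg
  have hc : ∀ x : F, ∃ T : Set K, T.Finite ∧ x ∈ auxE φ T := by
    intro x
    obtain ⟨L, hL, h⟩ := hcont x
    obtain ⟨T, hT, rfl⟩ := IntermediateField.fg_def.1 hL
    exact ⟨T, hT, fun σ hσ => h σ (aux_fix_adjoin T σ hσ)⟩
  choose Tf hTf hxT using hc
  let T : Set K := ⋃ x ∈ s, Tf x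
  have hT : T.Finite := s.finite_toSet.biUnion fun x _ => hTf x
  have hsT : ∀ x ∈ s, x ∈ auxE φ T := fun x hx =>
    auxE_mono φ (Set.subset_biUnion_of_mem (u := Tf) hx) (hxT x)
  obtain ⟨u, _, hu⟩ := exists_maximal_algebraicIndependent (R := k) (∅ : Set K) T
    (Set.empty_subset _) ((algebraicIndependent_empty_iff k K).2 (algebraMap k K).injective)
  have hui : AlgebraicIndependent k ((↑) : u → K) := hu.prop.1
  refine ⟨u, hT.subset hu.prop.2, hui, ?_⟩
  let A := IntermediateField.adjoin k u
  have : CharZero A := charZero_of_injective_algebraMap (algebraMap k A).injective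
  have halg : ∀ a ∈ T, IsIntegral A a := by
    intro a ha
    by_cases hau : a ∈ u
    · exact isIntegral_algebraMap (x := (⟨a, IntermediateField.subset_adjoin k u hau⟩ : A))
    · by_contra hn
      have htr : Transcendental (Algebra.adjoin k (id '' u)) (id a) := by
        rw [Set.image_id]
        intro hal
        apply hn
        have hle : Algebra.adjoin k u ≤ A.toSubalgebra := IntermediateField.algebra_adjoin_le_adjoin k u
        letI := (Subalgebra.inclusion hle).toRingHom.toAlgebra
        have : IsScalarTower (Algebra.adjoin k u) A.toSubalgebra K :=
          IsScalarTower.of_algebraMap_eq fun x => rfl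
        have h3 : IsAlgebraic A.toSubalgebra a :=
          IsAlgebraic.extendScalars (R := Algebra.adjoin k u) (Subalgebra.inclusion_injective hle) hal
        exact IsAlgebraic.isIntegral (K := A) h3
      have h2 := hu.prop.1.insert htr
      exact hau (hu.le_of_ge ⟨h2, Set.insert_subset ha hu.prop.2⟩ (Set.subset_insert a u)
        (Set.mem_insert a u))
  have hfin : FiniteDimensional A (IntermediateField.adjoin A T) := by
    have := hT.to_subtype
    exact IntermediateField.finiteDimensional_adjoin halg
  obtain ⟨θ, hθ⟩ := Field.exists_primitive_element A (IntermediateField.adjoin A T)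
  have hfix : ∀ σ : K ≃ₐ[k] K, (∀ a ∈ u, σ a = a) → σ θ = θ → ∀ a ∈ T, σ a = a := by
    intro σ hσ hσθ a ha
    have h1 : ∀ y : IntermediateField.adjoin A T, σ y = y := by
      intro y
      have hy : y ∈ IntermediateField.adjoin A {θ} := hθ ▸ IntermediateField.mem_top
      induction hy using IntermediateField.adjoin_induction with
      | mem x hx => rw [Set.mem_singleton_iff.1 hx]; exact hσθ
      | algebraMap x => exact aux_fix_adjoin u σ hσ x x.2
      | add x y _ _ hx hy =>
        rw [IntermediateField.coe_add, map_add, hx, hy]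
      | inv x _ hx => rw [IntermediateField.coe_inv, map_inv₀, hx]
      | mul x y _ _ hx hy => rw [IntermediateField.coe_mul, map_mul, hx, hy]
    exact h1 ⟨a, IntermediateField.subset_adjoin A T ha⟩
  have hθi : IsIntegral A (θ : K) :=
    (IsIntegral.of_finite A θ).map (IntermediateField.val (IntermediateField.adjoin A T))
  have hmem : ∀ x ∈ s, x ∈ (algebraMap K F).fieldRange ⊔ auxE φ u := fun x hx =>
    aux_desc φ hφ u θ hθi x fun σ h1 h2 => hsT x hx σ (hfix σ h1 h2)
  rw [eq_top_iff]
  intro x _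
  have hx : x ∈ IntermediateField.adjoin K (s : Set F) := hs ▸ IntermediateField.mem_top
  induction hx using IntermediateField.adjoin_induction with
  | mem x hx => exact hmem x hx
  | algebraMap c => exact (le_sup_left : (algebraMap K F).fieldRange ≤ _) ⟨c, rfl⟩
  | add x y _ _ hx hy => exact Subfield.add_mem _ (hx trivial) (hy trivial)
  | inv x _ hx => exact Subfield.inv_mem _ (hx trivial)
  | mul x y _ _ hx hy => exact Subfield.mul_mem _ (hx trivial) (hy trivial)
end



/-- Invariants generate the function field. -/
theorem invariants_generate_function_field
    (k K : Type) [Field k] [CharZero k] [IsAlgClosed k] [Field K] [IsAlgClosed K] [Algebra k K]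
    -- `K` has infinite transcendence degree over `k`
    (htr : ∀ L : IntermediateField k K, L.FG → ∃ x : K, Transcendental L x)
    (F : Type) [Field F] [Algebra K F]
    -- `F` is finitely generated as a field extension of `K`
    (hfg : ∃ s : Finset F, IntermediateField.adjoin K (s : Set F) = ⊤)
    -- a semilinear action of `Aut(K/k)` on `F`
    (φ : (K ≃ₐ[k] K) →* (F ≃+* F))
    (hsemi : ∀ (σ : K ≃ₐ[k] K) (c : K) (x : F),
      φ σ (algebraMap K F c * x) = algebraMap K F (σ c) * φ σ x)
    -- continuity of the action
    (hcont : ∀ x : F, ∃ L : IntermediateField k K, L.FG ∧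
      ∀ σ : K ≃ₐ[k] K, (∀ y ∈ L, σ y = y) → φ σ x = x) :
    -- the fixed field generates `F` over `K`
    IntermediateField.adjoin K {x : F | ∀ σ : K ≃ₐ[k] K, φ σ x = x} = ⊤ := by
  have hφ : ∀ (σ : K ≃ₐ[k] K) (c : K), φ σ (algebraMap K F c) = algebraMap K F (σ c) := by
    intro σ c
    have := hsemi σ c 1
    rwa [map_one, mul_one, mul_one] at this
  obtain ⟨u, hu, hui, hgen⟩ := aux_step2 φ hfg hφ hcont
  have := hu.to_subtype
  have h := aux_final φ htr hφ ((↑) : u → K) hui (by rwa [Subtype.range_coe])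
  have h2 : (algebraMap K F).fieldRange ⊔ auxE φ ∅ ≤
      (IntermediateField.adjoin K {x : F | ∀ σ : K ≃ₐ[k] K, φ σ x = x}).toSubfield := by
    refine sup_le ?_ ?_
    · rintro _ ⟨c, rfl⟩
      exact IntermediateField.algebraMap_mem _ c
    · intro x hx
      exact IntermediateField.subset_adjoin K _ fun σ => hx σ (by simp)
  rw [h] at h2
  rw [eq_top_iff]
  intro x _
  exact h2 (Subfield.mem_top x)
end

section
/- A continuous descent datum is effective over a finitely generated subfield: Let k be a field of characteristic zero and K an algebraically closed field extension of k of infinite transcendence degree over k. Let Y be an integral scheme that is quasi-projective over K, equipped with a continuous descent datum with respect to K/k. Then there exist an intermediate field L of K/k, finitely generated over k, a quasi-projective scheme Y' over L, and an isomorphism Y ≅ Y' ×_{Spec L} Spec K of schemes over K under which, for every σ ∈ Aut(K/k) fixing L pointwise, the action of σ on Y corresponds to the automorphism id_{Y'} × Spec(σ⁻¹) of Y' ×_{Spec L} Spec K. -/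
open AlgebraicGeometry CategoryTheory CategoryTheory.Limits

noncomputable section

namespace Paper

attribute [local instance] MvPolynomial.gradedAlgebra

/-- Projective `n`-space over a ring `K`, as `Proj` of the polynomial ring in `n + 1`
variables with its grading by total degree. -/
def ProjSpace (K : Type) [CommRing K] (n : ℕ) : Scheme :=
  Proj (MvPolynomial.homogeneousSubmodule (Fin (n + 1)) K)

/-- The structure morphism `ℙⁿ_K ⟶ Spec K`. -/
def ProjSpace.structMap (K : Type) [CommRing K] (n : ℕ) :
    ProjSpace K n ⟶ Spec (CommRingCat.of K) :=
  Proj.toSpecZero _ ≫ Spec.map (CommRingCat.ofHom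
    (algebraMap K (MvPolynomial.homogeneousSubmodule (Fin (n + 1)) K 0)))

/-- A scheme `Y` with structure morphism `p : Y ⟶ Spec K` is quasi-projective over `K` if
for some `n` there is an immersion (locally closed immersion) `Y ⟶ ℙⁿ_K` over `K`. -/
def QuasiProjectiveOver (K : Type) [CommRing K] {Y : Scheme}
    (p : Y ⟶ Spec (CommRingCat.of K)) : Prop :=
  ∃ (n : ℕ) (f : Y ⟶ ProjSpace K n), IsImmersion f ∧ f ≫ ProjSpace.structMap K n = p

/-- A scheme `Y` with structure morphism `p : Y ⟶ Spec K` is quasi-affine over `K` if it is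
of finite type over `K` and admits an open immersion over `K` into an affine `K`-scheme. -/
def QuasiAffineOver (K : Type) [CommRing K] {Y : Scheme}
    (p : Y ⟶ Spec (CommRingCat.of K)) : Prop :=
  LocallyOfFiniteType p ∧ QuasiCompact p ∧
    ∃ (Z : Scheme) (q : Z ⟶ Spec (CommRingCat.of K)) (j : Y ⟶ Z),
      IsAffine Z ∧ IsOpenImmersion j ∧ j ≫ q = p

variable (k K : Type) [Field k] [Field K] [Algebra k K]

/-- The automorphism `Spec (σ⁻¹)` of `Spec K` attached to `σ ∈ Aut(K/k)`. -/
def specAut (σ : K ≃ₐ[k] K) : Spec (CommRingCat.of K) ⟶ Spec (CommRingCat.of K) :=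
  Spec.map (CommRingCat.ofHom ((σ⁻¹ : K ≃ₐ[k] K) : K →+* K))

/-- A descent datum on the `K`-scheme `(Y, p)` with respect to `K/k`: an action of
`Aut(K/k)` on `Y` by scheme isomorphisms lifting the natural action on `Spec K`. -/
structure DescentDatum (Y : Scheme) (p : Y ⟶ Spec (CommRingCat.of K)) where
  act : (K ≃ₐ[k] K) →* Aut Y
  compat : ∀ σ : K ≃ₐ[k] K, (act σ).hom ≫ p = p ≫ specAut k K σ

lemma specAut_comp (σ : K ≃ₐ[k] K) :
    specAut k K σ ≫ Spec.map (CommRingCat.ofHom (algebraMap k K)) =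
      Spec.map (CommRingCat.ofHom (algebraMap k K)) := by
  rw [specAut, ← Spec.map_comp]
  congr 1
  ext x
  exact (σ⁻¹ : K ≃ₐ[k] K).commutes x

/-- The base change to `K` of a scheme `X` over `k`. -/
def baseChange {X : Scheme} (q : X ⟶ Spec (CommRingCat.of k)) : Scheme :=
  pullback q (Spec.map (CommRingCat.ofHom (algebraMap k K)))

/-- The automorphism `id_X × Spec (σ⁻¹)` of the base change `X ×_{Spec k} Spec K`. -/
def baseChangeAut {X : Scheme} (q : X ⟶ Spec (CommRingCat.of k)) (σ : K ≃ₐ[k] K) :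
    baseChange k K q ⟶ baseChange k K q :=
  pullback.map _ _ _ _ (𝟙 X) (specAut k K σ) (𝟙 (Spec (CommRingCat.of k)))
    (by simp) (by rw [Category.comp_id, specAut_comp])

/-- A scheme isomorphism fixes the generic point of an irreducible scheme. -/
lemma aut_base_genericPoint {Y : Scheme} [IrreducibleSpace Y] (e : Y ≅ Y) :
    e.hom.base (genericPoint Y) = genericPoint Y := by
  let h : Y ≃ₜ Y := TopCat.homeoOfIso (Scheme.forgetToTop.mapIso e)
  have hg : IsGenericPoint (h (genericPoint Y)) (⊤ : Set Y) := by
    rw [IsGenericPoint, ← Set.image_singleton, ← h.image_closure,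
      (genericPoint_spec Y).def, Set.top_eq_univ, Set.image_univ, h.surjective.range_eq]
  exact hg.eq (genericPoint_spec Y)

variable {k K}

/-- The action of `σ ∈ Aut(K/k)` on the function field of `Y`, given by pullback of rational
functions along the action of `σ⁻¹` on `Y`. -/
def DescentDatum.ffAction {Y : Scheme} [IrreducibleSpace Y] {p : Y ⟶ Spec (CommRingCat.of K)}
    (D : DescentDatum k K Y p) (σ : K ≃ₐ[k] K) :
    Y.functionField ⟶ Y.functionField :=
  eqToHom (congrArg Y.presheaf.stalk (aut_base_genericPoint ((D.act σ⁻¹ : Aut Y) : Y ≅ Y)).symm) ≫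
    (D.act σ⁻¹ : Aut Y).hom.stalkMap (genericPoint Y)

/-- Continuity of a descent datum on an irreducible scheme: every rational function
(i.e. element of the function field) is defined over a subfield of `K` that is finitely
generated over `k`. -/
def DescentDatum.IsContinuous {Y : Scheme} [IrreducibleSpace Y]
    {p : Y ⟶ Spec (CommRingCat.of K)} (D : DescentDatum k K Y p) : Prop :=
  ∀ f : Y.functionField, ∃ L : IntermediateField k K, L.FG ∧
    ∀ σ : K ≃ₐ[k] K, (∀ x ∈ L, σ x = x) → D.ffAction σ f = f


variable (k K)

lemma specAut_comp_val (L : IntermediateField k K) (σ : K ≃ₐ[k] K)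
    (hσ : ∀ x ∈ L, σ x = x) :
    specAut k K σ ≫ Spec.map (CommRingCat.ofHom (algebraMap (↥L) K)) =
      Spec.map (CommRingCat.ofHom (algebraMap (↥L) K)) := by
  rw [specAut, ← Spec.map_comp]
  congr 1
  ext x
  show (σ⁻¹ : K ≃ₐ[k] K) (algebraMap (↥L) K x) = algebraMap (↥L) K x
  exact (AlgEquiv.symm_apply_eq σ).mpr (hσ (algebraMap (↥L) K x) x.2).symm

section
/-- The graded ring homomorphism on polynomial rings given by change of scalars. -/
def gmap (R S : Type) [CommRing R] [CommRing S] [Algebra R S] (n : ℕ) :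
    MvPolynomial.homogeneousSubmodule (Fin (n + 1)) R →+*ᵍ
      MvPolynomial.homogeneousSubmodule (Fin (n + 1)) S where
  __ := MvPolynomial.map (algebraMap R S)
  map_mem {i} {x} hx := by
    have : x.IsHomogeneous i := hx
    exact this.map _

lemma gmap_apply {R S : Type} [CommRing R] [CommRing S] [Algebra R S] {n : ℕ}
    (x : MvPolynomial (Fin (n + 1)) R) :
    gmap R S n x = MvPolynomial.map (algebraMap R S) x := rfl

lemma X_mem_deg_one (R : Type) [CommRing R] {n : ℕ} (i : Fin (n + 1)) :
    (MvPolynomial.X i : MvPolynomial (Fin (n + 1)) R) ∈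
      MvPolynomial.homogeneousSubmodule (Fin (n + 1)) R 1 :=
  MvPolynomial.isHomogeneous_X R i

lemma irrelevant_le_span_X (R : Type) [CommRing R] (n : ℕ) :
    (HomogeneousIdeal.irrelevant (MvPolynomial.homogeneousSubmodule (Fin (n + 1)) R)).toIdeal ≤
      Ideal.span (Set.range (MvPolynomial.X : Fin (n + 1) → MvPolynomial (Fin (n + 1)) R)) := by
  refine (HomogeneousIdeal.toIdeal_irrelevant_le _).mpr fun i hi x hx ↦ ?_
  have hx : x.IsHomogeneous i := hx
  change x ∈ Ideal.span _
  rw [← Set.image_univ, MvPolynomial.mem_ideal_span_X_image]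
  intro m hm
  by_contra! H
  have h0 : m = 0 := by ext j; simpa using H j
  have := hx (MvPolynomial.mem_support_iff.mp hm)
  subst h0
  simp at this
  omega

lemma gmap_irrelevant (R S : Type) [CommRing R] [CommRing S] [Algebra R S] (n : ℕ) :
    HomogeneousIdeal.irrelevant (MvPolynomial.homogeneousSubmodule (Fin (n + 1)) S) ≤
      (HomogeneousIdeal.irrelevant (MvPolynomial.homogeneousSubmodule (Fin (n + 1)) R)).map
        (gmap R S n) := by
  suffices h : (HomogeneousIdeal.irrelevant
      (MvPolynomial.homogeneousSubmodule (Fin (n + 1)) S)).toIdeal ≤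
      ((HomogeneousIdeal.irrelevant (MvPolynomial.homogeneousSubmodule (Fin (n + 1)) R)).map
        (gmap R S n)).toIdeal from h
  refine (irrelevant_le_span_X S n).trans ?_
  rw [Ideal.span_le]
  rintro _ ⟨i, rfl⟩
  have : (MvPolynomial.X i : MvPolynomial (Fin (n + 1)) S) = gmap R S n (MvPolynomial.X i) := by
    simp [gmap_apply]
  rw [this]
  refine Ideal.mem_map_of_mem _ ?_
  exact (HomogeneousIdeal.mem_irrelevant_of_mem _ one_pos (X_mem_deg_one R i))

/-- The scalars map `R → (R[x]_g)_0`. -/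
def toAway {R : Type} [CommRing R] {n : ℕ} (g : MvPolynomial (Fin (n + 1)) R) :
    R →+* HomogeneousLocalization.Away (MvPolynomial.homogeneousSubmodule (Fin (n + 1)) R) g :=
  (HomogeneousLocalization.fromZeroRingHom
    (MvPolynomial.homogeneousSubmodule (Fin (n + 1)) R) _).comp (algebraMap R _)

lemma val_toAway {R : Type} [CommRing R] {n : ℕ} (g : MvPolynomial (Fin (n + 1)) R) (r : R) :
    (toAway g r).val =
      algebraMap (MvPolynomial (Fin (n + 1)) R) (Localization (Submonoid.powers g))
        (MvPolynomial.C r) := by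
  rw [← Localization.mk_one_eq_algebraMap]
  rfl

open TensorProduct in
lemma isPushout_of_bijective {R S A B : Type} [CommRing R] [CommRing S] [CommRing A] [CommRing B]
    [Algebra R S] [Algebra R A] [Algebra S B] [Algebra A B] [Algebra R B]
    [IsScalarTower R A B] [IsScalarTower R S B]
    (h : Function.Bijective (Algebra.TensorProduct.productMap
      (IsScalarTower.toAlgHom R S B) (IsScalarTower.toAlgHom R A B))) :
    IsPushout (CommRingCat.ofHom (algebraMap R S)) (CommRingCat.ofHom (algebraMap R A))
      (CommRingCat.ofHom (algebraMap S B)) (CommRingCat.ofHom (algebraMap A B)) :=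
  (CommRingCat.isPushout_tensorProduct R S A).of_iso (Iso.refl _) (Iso.refl _) (Iso.refl _)
    (RingEquiv.ofBijective (Algebra.TensorProduct.productMap
      (IsScalarTower.toAlgHom R S B) (IsScalarTower.toAlgHom R A B)).toRingHom h).toCommRingCatIso
    (by simp) (by simp)
    (by ext x; simp) (by ext x; simp)

lemma bijective_of_isPushout {R S A B : Type} [CommRing R] [CommRing S] [CommRing A] [CommRing B]
    [Algebra R S] [Algebra R A] [Algebra S B] [Algebra A B] [Algebra R B]
    [IsScalarTower R A B] [IsScalarTower R S B] [h : Algebra.IsPushout R S A B] :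
    Function.Bijective (Algebra.TensorProduct.productMap
      (IsScalarTower.toAlgHom R S B) (IsScalarTower.toAlgHom R A B)) := by
  convert (Algebra.IsPushout.equiv R S A B).bijective using 1
  ext x
  induction x with
  | zero => simp
  | add x y hx hy => simp only [map_add, hx, hy]
  | tmul x y => simp [Algebra.IsPushout.equiv_tmul]

open TensorProduct in
lemma isPushout_of_injective {R S A B A' B' : Type} [CommRing R] [CommRing S] [CommRing A]
    [CommRing B] [CommRing A'] [CommRing B']
    (rs : R →+* S) (ra : R →+* A) (sb : S →+* B) (ab : A →+* B) (va : A →+* A') (vb : B →+* B')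
    (ab' : A' →+* B') (hflat : rs.Flat) (hva : Function.Injective va)
    (h1 : sb.comp rs = ab.comp ra) (h2 : vb.comp ab = ab'.comp va)
    (hpo : IsPushout (CommRingCat.ofHom rs) (CommRingCat.ofHom (va.comp ra))
      (CommRingCat.ofHom (vb.comp sb)) (CommRingCat.ofHom ab'))
    (hsurj : Subring.closure (Set.range sb ∪ Set.range ab) = ⊤) :
    IsPushout (CommRingCat.ofHom rs) (CommRingCat.ofHom ra)
      (CommRingCat.ofHom sb) (CommRingCat.ofHom ab) := by
  let _ : Algebra R S := rs.toAlgebra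
  let _ : Algebra R A := ra.toAlgebra
  let _ : Algebra R B := (ab.comp ra).toAlgebra
  let _ : Algebra S B := sb.toAlgebra
  let _ : Algebra A B := ab.toAlgebra
  let _ : Algebra R A' := (va.comp ra).toAlgebra
  let _ : Algebra A' B' := ab'.toAlgebra
  let _ : Algebra S B' := (vb.comp sb).toAlgebra
  let _ : Algebra R B' := ((vb.comp sb).comp rs).toAlgebra
  have : IsScalarTower R A B := .of_algebraMap_eq' rfl
  have : IsScalarTower R S B := .of_algebraMap_eq' h1.symm
  have : IsScalarTower R S B' := .of_algebraMap_eq' rfl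
  have : IsScalarTower R A' B' := .of_algebraMap_eq' (by
    change (vb.comp sb).comp rs = ab'.comp (va.comp ra)
    rw [RingHom.comp_assoc, h1, ← RingHom.comp_assoc, h2, RingHom.comp_assoc])
  have : Module.Flat R S := hflat
  have hp : Algebra.IsPushout R S A' B' := CommRingCat.isPushout_iff_isPushout.mp hpo
  have hbij := bijective_of_isPushout (R := R) (S := S) (A := A') (B := B')
  let vaL : A →ₐ[R] A' := { va with commutes' := fun r ↦ rfl }
  have hinj : Function.Injective (vaL.toLinearMap.lTensor S) :=
    Module.Flat.lTensor_preserves_injective_linearMap _ hva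
  refine isPushout_of_bijective (R := R) (S := S) (A := A) (B := B) ⟨?_, ?_⟩
  · have hc : ∀ x, vb (Algebra.TensorProduct.productMap
        (IsScalarTower.toAlgHom R S B) (IsScalarTower.toAlgHom R A B) x) =
        Algebra.TensorProduct.productMap
        (IsScalarTower.toAlgHom R S B') (IsScalarTower.toAlgHom R A' B')
          (vaL.toLinearMap.lTensor S x) := by
      intro x
      induction x with
      | zero => simp
      | add x y hx hy => simp only [map_add, hx, hy]
      | tmul x y =>
        simp only [Algebra.TensorProduct.productMap_apply_tmul, map_mul,
          LinearMap.lTensor_tmul]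
        congr 1
        exact DFunLike.congr_fun h2 y
    intro x y hxy
    apply hinj
    apply hbij.1
    rw [← hc, ← hc, hxy]
  · rw [← AlgHom.coe_toRingHom, ← RingHom.range_eq_top, ← top_le_iff, ← hsurj,
      Subring.closure_le]
    rintro _ (⟨x, rfl⟩ | ⟨x, rfl⟩)
    · exact ⟨x ⊗ₜ 1, by simp; rfl⟩
    · exact ⟨1 ⊗ₜ x, by simp; rfl⟩

attribute [local instance] MvPolynomial.algebraMvPolynomial in
lemma away_isPushout {R S : Type} [CommRing R] [CommRing S] [Algebra R S] [Module.Flat R S] {n : ℕ}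
    (g : MvPolynomial (Fin (n + 1)) R) {d : ℕ}
    (hg : g ∈ MvPolynomial.homogeneousSubmodule (Fin (n + 1)) R d) :
    IsPushout (CommRingCat.ofHom (algebraMap R S)) (CommRingCat.ofHom (toAway g))
      (CommRingCat.ofHom (toAway (gmap R S n g)))
      (CommRingCat.ofHom (HomogeneousLocalization.Away.map (gmap R S n) g)) := by
  let A := MvPolynomial (Fin (n + 1)) R
  let B := MvPolynomial (Fin (n + 1)) S
  let ab' : Localization (Submonoid.powers g) →+* Localization (Submonoid.powers (gmap R S n g)) :=
    IsLocalization.map _ (MvPolynomial.map (algebraMap R S)) (M := Submonoid.powers g)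
      (T := Submonoid.powers (gmap R S n g)) (by rintro _ ⟨m, rfl⟩; exact ⟨m, by simp [gmap_apply]⟩)
  have hab' : ab'.comp (algebraMap A _) = (algebraMap B _).comp
      (MvPolynomial.map (algebraMap R S)) := IsLocalization.map_comp _
  refine isPushout_of_injective _ _ _ _
    (algebraMap _ (Localization (Submonoid.powers g)))
    (algebraMap _ (Localization (Submonoid.powers (gmap R S n g)))) ab' ?_ ?_ ?_ ?_ ?_ ?_
  · exact (RingHom.flat_algebraMap_iff).mpr inferInstance
  · exact HomogeneousLocalization.val_injective _
  · ext x
    refine (val_toAway _ _).trans ?_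
    rw [← MvPolynomial.map_C, ← Localization.mk_one_eq_algebraMap]
    change _ = Localization.mk _ _
    congr 1
    apply Subtype.ext
    exact (map_one (gmap R S n)).symm
  · ext x
    obtain ⟨m, a, ha, rfl⟩ := HomogeneousLocalization.Away.mk_surjective _ hg x
    simp only [RingHom.comp_apply, HomogeneousLocalization.Away.map_mk,
      HomogeneousLocalization.algebraMap_apply, HomogeneousLocalization.Away.val_mk]
    simp only [Localization.mk_eq_mk', ab', IsLocalization.map_mk']
    congr 1
    ext
    simp [gmap_apply]
  · have e1 : IsPushout (CommRingCat.ofHom (algebraMap R S)) (CommRingCat.ofHom (algebraMap R A))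
      (CommRingCat.ofHom (algebraMap S B)) (CommRingCat.ofHom (algebraMap A B)) :=
        CommRingCat.isPushout_of_isPushout R S A B
    have : IsLocalization ((Submonoid.powers g).map (MvPolynomial.map (algebraMap R S)))
      (Localization (Submonoid.powers (gmap R S n g))) := by
        rw [Submonoid.map_powers]
        exact Localization.isLocalization (M := Submonoid.powers (gmap R S n g))
    have e2 := CommRingCat.isPushout_of_isLocalization (MvPolynomial.map (algebraMap R S)) ab'
      hab' (Submonoid.powers g)
    have e3 := e1.paste_vert e2
    have t1 : (algebraMap (HomogeneousLocalization.Away _ g)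
        (Localization (Submonoid.powers g))).comp (toAway g) =
        (algebraMap A (Localization (Submonoid.powers g))).comp (algebraMap R A) := by
      ext x; exact val_toAway g x
    have t2 : (algebraMap (HomogeneousLocalization.Away _ (gmap R S n g))
        (Localization (Submonoid.powers (gmap R S n g)))).comp (toAway (gmap R S n g)) =
        (algebraMap B (Localization (Submonoid.powers (gmap R S n g)))).comp (algebraMap S B) := by
      ext x; exact val_toAway _ x
    rw [t1, t2]
    exact e3
  · rw [eq_top_iff]
    rintro x -
    obtain ⟨m, a, ha, rfl⟩ := HomogeneousLocalization.Away.mk_surjective _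
      ((gmap R S n).map_mem hg) x
    have hmem : ∀ α : a.support, (MvPolynomial.monomial α.1 (1 : R)) ∈
        MvPolynomial.homogeneousSubmodule (Fin (n + 1)) R (m • d) := fun α ↦ by
      refine MvPolynomial.isHomogeneous_monomial _ ?_
      have ha : a.IsHomogeneous (m • d) := ha
      have := ha (MvPolynomial.mem_support_iff.mp α.2)
      rwa [Finsupp.degree_eq_weight_one]
    have key : HomogeneousLocalization.Away.mk _ ((gmap R S n).map_mem hg) m a ha =
        ∑ α : a.support, toAway (gmap R S n g) (a.coeff α.1) *
          HomogeneousLocalization.Away.map (gmap R S n) g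
            (HomogeneousLocalization.Away.mk _ hg m (MvPolynomial.monomial α.1 (1 : R))
              (hmem α)) := by
      apply HomogeneousLocalization.val_injective
      rw [← HomogeneousLocalization.algebraMap_apply, ← HomogeneousLocalization.algebraMap_apply,
        map_sum]
      simp only [map_mul, HomogeneousLocalization.algebraMap_apply, val_toAway,
        HomogeneousLocalization.Away.map_mk, HomogeneousLocalization.Away.val_mk]
      simp only [← Localization.mk_one_eq_algebraMap, Localization.mk_mul, one_mul]
      rw [← Localization.mk_sum]
      congr 1
      conv_lhs => rw [MvPolynomial.as_sum a, ← Finset.sum_coe_sort]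
      refine Finset.sum_congr rfl fun α _ ↦ ?_
      simp [gmap_apply, MvPolynomial.C_mul_monomial]
    rw [key]
    refine sum_mem fun α _ ↦ mul_mem ?_ ?_
    · exact Subring.subset_closure (Or.inl ⟨_, rfl⟩)
    · exact Subring.subset_closure (Or.inr ⟨_, rfl⟩)

end

section
/-- The change-of-scalars morphism of projective spaces. -/
def projMap (R S : Type) [CommRing R] [CommRing S] [Algebra R S] (n : ℕ) :
    ProjSpace S n ⟶ ProjSpace R n :=
  Proj.map (gmap R S n) (gmap_irrelevant R S n)

/-- The basic open subset of projective space as an open of `ProjSpace`. -/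
def pOpen {R : Type} [CommRing R] {n : ℕ} (g : MvPolynomial (Fin (n + 1)) R) :
    (ProjSpace R n).Opens :=
  Proj.basicOpen (MvPolynomial.homogeneousSubmodule (Fin (n + 1)) R) g

lemma projMap_preimage {R S : Type} [CommRing R] [CommRing S] [Algebra R S] {n : ℕ}
    (g : MvPolynomial (Fin (n + 1)) R) :
    projMap R S n ⁻¹ᵁ pOpen g = pOpen (gmap R S n g) := rfl

/-- The chart `Spec (R[x]_g)_0 ⟶ ℙⁿ_R`. -/
def chart {R : Type} [CommRing R] {n : ℕ} (g : MvPolynomial (Fin (n + 1)) R) {d : ℕ}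
    (hg : g ∈ MvPolynomial.homogeneousSubmodule (Fin (n + 1)) R d) (hd : 0 < d) :
    Spec (CommRingCat.of (HomogeneousLocalization.Away
      (MvPolynomial.homogeneousSubmodule (Fin (n + 1)) R) g)) ⟶ ProjSpace R n :=
  Proj.awayι _ g hg hd

instance {R : Type} [CommRing R] {n : ℕ} (g : MvPolynomial (Fin (n + 1)) R) {d : ℕ}
    (hg : g ∈ MvPolynomial.homogeneousSubmodule (Fin (n + 1)) R d) (hd : 0 < d) :
    IsOpenImmersion (chart g hg hd) := by
  delta chart ProjSpace; infer_instance

lemma chart_opensRange {R : Type} [CommRing R] {n : ℕ} (g : MvPolynomial (Fin (n + 1)) R) {d : ℕ}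
    (hg : g ∈ MvPolynomial.homogeneousSubmodule (Fin (n + 1)) R d) (hd : 0 < d) :
    (chart g hg hd).opensRange = pOpen g := Proj.opensRange_awayι _ _ _ _

lemma chart_structMap {R : Type} [CommRing R] {n : ℕ} (g : MvPolynomial (Fin (n + 1)) R) {d : ℕ}
    (hg : g ∈ MvPolynomial.homogeneousSubmodule (Fin (n + 1)) R d) (hd : 0 < d) :
    chart g hg hd ≫ ProjSpace.structMap R n = Spec.map (CommRingCat.ofHom (toAway g)) := by
  refine (Proj.awayι_toSpecZero_assoc _ _ _ _ _).trans ?_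
  rw [← Spec.map_comp]
  rfl

lemma chart_projMap {R S : Type} [CommRing R] [CommRing S] [Algebra R S] {n : ℕ}
    (g : MvPolynomial (Fin (n + 1)) R) {d : ℕ}
    (hg : g ∈ MvPolynomial.homogeneousSubmodule (Fin (n + 1)) R d) (hd : 0 < d) :
    chart (gmap R S n g) ((gmap R S n).map_mem hg) hd ≫ projMap R S n =
      Spec.map (CommRingCat.ofHom (HomogeneousLocalization.Away.map (gmap R S n) g)) ≫
        chart g hg hd :=
  Proj.awayι_comp_map _ _ _ _ _

/-- The standard cover of projective space. -/
def stdCover (R : Type) [CommRing R] (n : ℕ) : (ProjSpace R n).OpenCover :=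
  (Proj.affineOpenCoverOfIrrelevantLESpan
    (MvPolynomial.homogeneousSubmodule (Fin (n + 1)) R) MvPolynomial.X (X_mem_deg_one R)
    (fun _ ↦ one_pos) (irrelevant_le_span_X R n)).openCover

lemma projMap_isPullback (R S : Type) [CommRing R] [CommRing S] [Algebra R S] [Module.Flat R S]
    (n : ℕ) :
    IsPullback (projMap R S n) (ProjSpace.structMap S n) (ProjSpace.structMap R n)
      (Spec.map (CommRingCat.ofHom (algebraMap R S))) := by
  refine Scheme.isPullback_of_openCover _ _ _ _ (stdCover R n) fun i ↦ ?_
  have h1 : IsPullback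
      (Spec.map (CommRingCat.ofHom (HomogeneousLocalization.Away.map (gmap R S n)
        (MvPolynomial.X i))))
      (chart (gmap R S n (MvPolynomial.X i)) ((gmap R S n).map_mem (X_mem_deg_one R i)) one_pos)
      (chart (MvPolynomial.X i) (X_mem_deg_one R i) one_pos) (projMap R S n) := by
    refine IsOpenImmersion.isPullback _ _ _ _ (chart_projMap _ _ _) ?_
    rw [chart_opensRange, chart_opensRange]
    rfl
  have h2 := (isPullback_SpecMap_of_isPushout _ _ _ _ (away_isPushout (S := S)
    (MvPolynomial.X i) (X_mem_deg_one R i))).flip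
  refine h2.of_iso h1.flip.isoPullback (Iso.refl _) (Iso.refl _) (Iso.refl _) ?_ ?_ ?_ ?_
  · simp only [Iso.refl_hom, Category.comp_id]
    exact (h1.flip.isoPullback_hom_snd).symm
  · simp only [Iso.refl_hom, Category.comp_id]
    refine (chart_structMap _ ((gmap R S n).map_mem (X_mem_deg_one R i)) one_pos).symm.trans ?_
    exact (h1.flip.isoPullback_hom_fst_assoc _).symm
  · simp only [Iso.refl_hom, Category.comp_id, Category.id_comp]
    exact (chart_structMap _ (X_mem_deg_one R i) one_pos).symm
  · simp

end

section
lemma comap_map_eq_of_generators {P Q : Scheme} (π : P ⟶ Q) [IsAffineHom π] (J : P.IdealSheafData)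
    {ι : Type} (V : ι → Q.affineOpens) (hV : ⨆ i, (V i).1 = ⊤)
    (hgen : ∀ i, J.ideal ⟨π ⁻¹ᵁ (V i).1, (V i).2.preimage π⟩ ≤
      Ideal.span ((J.ideal ⟨π ⁻¹ᵁ (V i).1, (V i).2.preimage π⟩ : Set _) ∩
        Set.range (π.app (V i).1).hom)) :
    (J.map π).comap π = J := by
  refine le_antisymm (Scheme.IdealSheafData.comap_map_le _ _) ?_
  refine Scheme.IdealSheafData.le_of_iSup_eq_top
    (fun i ↦ ⟨π ⁻¹ᵁ (V i).1, (V i).2.preimage π⟩) ?_ fun i ↦ ?_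
  · dsimp only
    rw [← Scheme.Hom.preimage_iSup, hV]
    rfl
  · refine (hgen i).trans ?_
    rw [Ideal.span_le]
    rintro _ ⟨h1, ⟨t, rfl⟩⟩
    have h2 : t ∈ (J.map π).ideal (V i) := by
      rw [Scheme.IdealSheafData.ideal_map_of_isAffineHom]
      exact h1
    have h3 := Scheme.IdealSheafData.le_map_comap (f := π) (J.map π) (V i) h2
    rw [Scheme.IdealSheafData.ideal_map_of_isAffineHom] at h3
    exact h3

theorem descend_immersion {P Q Y : Scheme} (π : P ⟶ Q) [IsAffineHom π] (f : Y ⟶ P)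
    [IsImmersion f] [QuasiCompact f] (U' : Q.Opens) (hU : π ⁻¹ᵁ U' = f.coborderRange)
    {ι : Type} (V : ι → Q.affineOpens) (hV : ⨆ i, (V i).1 = ⊤)
    (hgen : ∀ i, f.ker.ideal ⟨π ⁻¹ᵁ (V i).1, (V i).2.preimage π⟩ ≤
      Ideal.span ((f.ker.ideal ⟨π ⁻¹ᵁ (V i).1, (V i).2.preimage π⟩ : Set _) ∩
        Set.range (π.app (V i).1).hom)) :
    ∃ (Y' : Scheme) (f' : Y' ⟶ Q) (g : Y ⟶ Y'), IsImmersion f' ∧ IsPullback g f f' π := by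
  have h0 := comap_map_eq_of_generators π f.ker V hV hgen
  let J' := f.ker.map π
  let zf : f.ker.subscheme ⟶ J'.subscheme :=
    Scheme.IdealSheafData.subschemeMap f.ker J' π le_rfl
  have hzf : zf ≫ J'.subschemeι = f.ker.subschemeι ≫ π :=
    Scheme.IdealSheafData.subschemeMap_subschemeι _ _ _ _
  have h1 : IsPullback f.ker.subschemeι zf π J'.subschemeι := by
    refine isPullback_of_isClosedImmersion _ _ _ _ hzf.symm ?_
    rw [Scheme.IdealSheafData.ker_subschemeι, Scheme.IdealSheafData.ker_subschemeι, h0]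
  have h2 := IsImmersion.isPullback_toImage_liftCoborder f
  let T : J'.subscheme.Opens := J'.subschemeι ⁻¹ᵁ U'
  have hr : f.toImage.opensRange = zf ⁻¹ᵁ T := by
    have : zf ⁻¹ᵁ T = f.ker.subschemeι ⁻¹ᵁ f.coborderRange := by
      rw [← hU]
      change (zf ≫ J'.subschemeι) ⁻¹ᵁ U' = (f.ker.subschemeι ≫ π) ⁻¹ᵁ U'
      rw [hzf]
    rw [this]
    have e : f.toImage.opensRange = (pullback.fst f.imageι f.coborderRange.ι).opensRange := by
      have := Scheme.Hom.opensRange_comp_of_isIso h2.isoPullback.hom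
        (pullback.fst f.imageι f.coborderRange.ι)
      simpa only [h2.isoPullback_hom_fst] using this
    rw [e, Scheme.Hom.opensRange_pullbackFst, Scheme.Opens.opensRange_ι]
  let g : Y ⟶ T := IsOpenImmersion.lift T.ι (f.toImage ≫ zf) (by
    rintro _ ⟨y, rfl⟩
    have : f.toImage y ∈ f.toImage.opensRange := ⟨y, rfl⟩
    rw [hr] at this
    simpa using this)
  have hg : g ≫ T.ι = f.toImage ≫ zf := IsOpenImmersion.lift_fac _ _ _
  have h3 : IsPullback g f.toImage T.ι zf := by
    refine IsOpenImmersion.isPullback _ _ _ _ hg.symm ?_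
    rw [hr, Scheme.Opens.opensRange_ι]
  refine ⟨T, T.ι ≫ J'.subschemeι, g, inferInstance, ?_⟩
  have := h3.paste_vert h1.flip
  rwa [Scheme.Hom.toImage_imageι] at this

end

section
lemma algebraMap_zero_surjective (R : Type) [CommRing R] (n : ℕ) : Function.Surjective
    (algebraMap R (MvPolynomial.homogeneousSubmodule (Fin (n + 1)) R 0)) := by
  rintro ⟨x, hx⟩
  have hx : x.IsHomogeneous 0 := hx
  have h := MvPolynomial.totalDegree_eq_zero_iff_eq_C.mp (hx.totalDegree_le.antisymm (Nat.zero_le _))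
  exact ⟨_, Subtype.ext h.symm⟩

lemma projSpace_isNoetherian (K : Type) [Field K] (n : ℕ) : IsNoetherian (ProjSpace K n) := by
  have h0 : IsNoetherianRing (MvPolynomial.homogeneousSubmodule (Fin (n + 1)) K 0) :=
    isNoetherianRing_of_surjective _ _ _ (algebraMap_zero_surjective K n)
  have : IsScalarTower K (MvPolynomial.homogeneousSubmodule (Fin (n + 1)) K 0)
    (MvPolynomial (Fin (n + 1)) K) := ⟨fun a b c ↦ by
      change (a • b.1) * c = a • (b.1 * c)
      exact smul_mul_assoc _ _ _⟩
  have h1 : Algebra.FiniteType (MvPolynomial.homogeneousSubmodule (Fin (n + 1)) K 0)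
      (MvPolynomial (Fin (n + 1)) K) := Algebra.FiniteType.of_restrictScalars_finiteType K _ _
  have h4 : LocallyOfFiniteType
      (Proj.toSpecZero (MvPolynomial.homogeneousSubmodule (Fin (n + 1)) K)) := by
    apply Proj.instLocallyOfFiniteTypeToSpecZeroOfFiniteTypeSubtypeMemOfNatNat
  have h5 : QuasiCompact
      (Proj.toSpecZero (MvPolynomial.homogeneousSubmodule (Fin (n + 1)) K)) := by
    apply Proj.instQuasiCompactToSpecZeroOfFiniteTypeSubtypeMemOfNatNat
  have h2 : IsLocallyNoetherian
      (Proj (MvPolynomial.homogeneousSubmodule (Fin (n + 1)) K)) :=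
    LocallyOfFiniteType.isLocallyNoetherian
      (Proj.toSpecZero (MvPolynomial.homogeneousSubmodule (Fin (n + 1)) K))
  have h3 : CompactSpace
      (Proj (MvPolynomial.homogeneousSubmodule (Fin (n + 1)) K)) :=
    QuasiCompact.compactSpace_of_compactSpace 
     (Proj.toSpecZero (MvPolynomial.homogeneousSubmodule (Fin (n + 1)) K))
  have h6 : IsNoetherian (Proj (MvPolynomial.homogeneousSubmodule (Fin (n + 1)) K)) := { }
  exact h6

lemma quasiCompact_of_isImmersion {X Y : Scheme} [IsNoetherian Y] (f : X ⟶ Y) [IsImmersion f] :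
    QuasiCompact f := by
  have h : TopologicalSpace.NoetherianSpace X := by
    have := (IsNoetherian.noetherianSpace (X := Y))
    exact (f.isEmbedding.isInducing).noetherianSpace
  exact ⟨fun _ _ _ ↦ TopologicalSpace.NoetherianSpace.isCompact _⟩

lemma exists_finset_pOpen {K : Type} [Field K] {n : ℕ} (U : (ProjSpace K n).Opens) :
    ∃ s : Finset (MvPolynomial (Fin (n + 1)) K), U = ⨆ g : s, pOpen g.1 := by
  have := projSpace_isNoetherian K n
  have hU : IsCompact (U : Set (ProjSpace K n)) := TopologicalSpace.NoetherianSpace.isCompact _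
  have hB : TopologicalSpace.Opens.IsBasis (Set.range (pOpen (R := K) (n := n))) :=
    Proj.isBasis_basicOpen _
  obtain ⟨Us, hUs, hf, rfl⟩ := hB.exists_finite_of_isCompact hU
  choose φ hφ using fun V : Us ↦ hUs V.2
  have := hf.fintype
  classical
  refine ⟨Finset.univ.image φ, le_antisymm (sSup_le fun V hV ↦ ?_) (iSup_le fun g ↦ ?_)⟩
  · refine (hφ ⟨V, hV⟩).ge.trans ?_
    exact le_iSup (fun g : (Finset.univ.image φ : Finset _) ↦ pOpen g.1)
      ⟨φ ⟨V, hV⟩, Finset.mem_image_of_mem _ (Finset.mem_univ _)⟩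
  · obtain ⟨V, -, hV⟩ := Finset.mem_image.mp g.2
    rw [← hV, hφ]
    exact le_sSup V.2

end

section
open HomogeneousLocalization

/-- The section `h / g ^ m` on the basic open of `g`. -/
def sec {R : Type} [CommRing R] {n : ℕ} (g : MvPolynomial (Fin (n + 1)) R) {d : ℕ}
    (hg : g ∈ MvPolynomial.homogeneousSubmodule (Fin (n + 1)) R d) (m : ℕ)
    (h : MvPolynomial (Fin (n + 1)) R)
    (hh : h ∈ MvPolynomial.homogeneousSubmodule (Fin (n + 1)) R (m • d)) :
    Γ(ProjSpace R n, pOpen g) :=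
  (Proj.awayToSection (MvPolynomial.homogeneousSubmodule (Fin (n + 1)) R) g).hom
    (Away.mk _ hg m h hh)

lemma sec_surj {R : Type} [CommRing R] {n : ℕ} (g : MvPolynomial (Fin (n + 1)) R) {d : ℕ}
    (hg : g ∈ MvPolynomial.homogeneousSubmodule (Fin (n + 1)) R d) (hd : 0 < d)
    (t : Γ(ProjSpace R n, pOpen g)) : ∃ m h hh, t = sec g hg m h hh := by
  let e := Proj.basicOpenIsoAway (MvPolynomial.homogeneousSubmodule (Fin (n + 1)) R) g hg hd
  obtain ⟨m, h, hh, H⟩ := Away.mk_surjective _ hg (e.inv.hom t)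
  refine ⟨m, h, hh, ?_⟩
  change _ = e.hom.hom _
  rw [H]
  exact (e.inv_hom_id_apply t).symm

lemma sec_app {R S : Type} [CommRing R] [CommRing S] [Algebra R S] {n : ℕ}
    (g : MvPolynomial (Fin (n + 1)) R) {d : ℕ}
    (hg : g ∈ MvPolynomial.homogeneousSubmodule (Fin (n + 1)) R d) (m : ℕ)
    (h : MvPolynomial (Fin (n + 1)) R)
    (hh : h ∈ MvPolynomial.homogeneousSubmodule (Fin (n + 1)) R (m • d)) :
    ((projMap R S n).app (pOpen g)).hom (sec g hg m h hh) =
      sec (gmap R S n g) ((gmap R S n).map_mem hg) m (gmap R S n h) ((gmap R S n).map_mem hh) := by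
  have := Proj.awayToSection_comp_appLE (gmap R S n) (gmap_irrelevant R S n) hg
  have := congr($(this).hom (Away.mk _ hg m h hh))
  rw [Scheme.Hom.app_eq_appLE]
  refine this.trans ?_
  refine congr((Proj.awayToSection _ (gmap R S n g)).hom $(Away.map_mk (gmap R S n) g hg m h hh)) 

lemma gen_of {R S : Type} [CommRing R] [CommRing S] [Algebra R S] {n : ℕ}
    (hinj : Function.Injective (algebraMap R S))
    (I : (ProjSpace S n).IdealSheafData)
    (g : MvPolynomial (Fin (n + 1)) R) (g' : MvPolynomial (Fin (n + 1)) S) {d : ℕ}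
    (hg : g ∈ MvPolynomial.homogeneousSubmodule (Fin (n + 1)) R d)
    (hg' : g' ∈ MvPolynomial.homogeneousSubmodule (Fin (n + 1)) S d)
    (hgg' : gmap R S n g = g') (ha : IsAffineOpen (pOpen g'))
    (T : Set Γ(ProjSpace S n, pOpen g'))
    (hT : I.ideal ⟨pOpen g', ha⟩ = Ideal.span T)
    (hT' : ∀ t ∈ T, ∃ m h hh, t = sec g' hg' m h hh ∧ h ∈ Set.range (gmap R S n))
    (ha' : IsAffineOpen (projMap R S n ⁻¹ᵁ pOpen g)) :
    I.ideal ⟨projMap R S n ⁻¹ᵁ pOpen g, ha'⟩ ≤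
      Ideal.span ((I.ideal ⟨projMap R S n ⁻¹ᵁ pOpen g, ha'⟩ : Set _) ∩
        Set.range ((projMap R S n).app (pOpen g)).hom) := by
  subst hgg'
  change I.ideal ⟨pOpen (gmap R S n g), ha⟩ ≤ Ideal.span ((I.ideal ⟨pOpen (gmap R S n g), ha⟩ : Set _) ∩ _)
  refine hT.le.trans (Ideal.span_mono fun t ht ↦ ⟨?_, ?_⟩)
  · rw [hT]; exact Ideal.subset_span ht
  · obtain ⟨m, h, hh, rfl, h', rfl⟩ := hT' t ht
    have hh' : h' ∈ MvPolynomial.homogeneousSubmodule (Fin (n + 1)) R (m • d) := by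
      have : (MvPolynomial.map (algebraMap R S) h').IsHomogeneous (m • d) := hh
      exact MvPolynomial.IsHomogeneous.of_map hinj this
    exact ⟨sec g hg m h' hh', sec_app _ _ _ _ _⟩

end

section
open HomogeneousLocalization

lemma exists_field_of_polys (k K : Type) [Field k] [Field K] [Algebra k K] (n : ℕ)
    (F : Set (MvPolynomial (Fin (n + 1)) K)) (hF : F.Finite) :
    ∃ L0 : IntermediateField k K, L0.FG ∧ ∀ L : IntermediateField k K, L0 ≤ L →
      ∀ h ∈ F, h ∈ Set.range (gmap L K n) := by
  classical
  refine ⟨IntermediateField.adjoin k (hF.toFinset.biUnion fun h ↦ h.coeffs : Finset K),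
    IntermediateField.fg_adjoin_finset _, fun L hL h hh ↦ ?_⟩
  refine MvPolynomial.mem_range_map_iff_coeffs_subset.mpr fun c hc ↦ ⟨⟨c, hL ?_⟩, rfl⟩
  refine IntermediateField.subset_adjoin _ _ ?_
  simp only [Finset.coe_biUnion, Set.mem_iUnion]
  exact ⟨h, by simpa using hh, hc⟩

lemma pOpen_X_affine (R : Type) [CommRing R] {n : ℕ} (i : Fin (n + 1)) :
    IsAffineOpen (pOpen (MvPolynomial.X i : MvPolynomial (Fin (n + 1)) R)) :=
  Proj.isAffineOpen_basicOpen _ _ (X_mem_deg_one R i) one_pos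

lemma iSup_pOpen_X (R : Type) [CommRing R] (n : ℕ) :
    ⨆ i : Fin (n + 1), pOpen (MvPolynomial.X i : MvPolynomial (Fin (n + 1)) R) = ⊤ :=
  Proj.iSup_basicOpen_eq_top _ _ (irrelevant_le_span_X R n)

lemma exists_descent (k K : Type) [Field k] [Field K] [Algebra k K] {n : ℕ} {Y : Scheme}
    (f : Y ⟶ ProjSpace K n) [IsImmersion f] :
    ∃ L0 : IntermediateField k K, L0.FG ∧ ∀ L : IntermediateField k K, L0 ≤ L →
      ∃ (Y' : Scheme) (f' : Y' ⟶ ProjSpace L n) (g : Y ⟶ Y'), IsImmersion f' ∧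
        IsPullback g f f' (projMap L K n) := by
  have hN := projSpace_isNoetherian K n
  have hqc := quasiCompact_of_isImmersion f
  obtain ⟨s, hs⟩ := exists_finset_pOpen f.coborderRange
  have hfg (i : Fin (n + 1)) : (f.ker.ideal ⟨pOpen (MvPolynomial.X i), pOpen_X_affine K i⟩).FG := by
    have := IsLocallyNoetherian.component_noetherian
      (⟨pOpen (MvPolynomial.X i), pOpen_X_affine K i⟩ : (ProjSpace K n).affineOpens)
    exact IsNoetherian.noetherian _
  choose T hT using hfg
  choose m h hh H using fun (i : Fin (n + 1)) t ↦
    sec_surj (MvPolynomial.X i) (X_mem_deg_one K i) one_pos t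
  obtain ⟨L0, hL0, hL⟩ := exists_field_of_polys k K n (s ∪ ⋃ i, (h i) '' (T i))
    (s.finite_toSet.union (Set.finite_iUnion fun i ↦ (T i).finite_toSet.image _))
  refine ⟨L0, hL0, fun L hLL ↦ ?_⟩
  replace hL := hL L hLL
  have hinj : Function.Injective (algebraMap L K) := (algebraMap L K).injective
  have : IsAffineHom (projMap L K n) :=
    MorphismProperty.of_isPullback (P := @IsAffineHom) (projMap_isPullback L K n).flip inferInstance
  have hs' : ∀ g : s, ∃ g', gmap L K n g' = g.1 := fun g ↦ hL g.1 (Or.inl g.2)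
  choose s' hs' using hs'
  refine descend_immersion (projMap L K n) f (⨆ g : s, pOpen (s' g)) ?_
    (fun i : Fin (n + 1) ↦ ⟨pOpen (MvPolynomial.X i), pOpen_X_affine L i⟩) (iSup_pOpen_X L n) ?_
  · rw [hs, Scheme.Hom.preimage_iSup]
    refine iSup_congr fun g ↦ ?_
    rw [projMap_preimage, hs']
  · intro i
    refine gen_of hinj f.ker (MvPolynomial.X i) (MvPolynomial.X i) (X_mem_deg_one L i)
      (X_mem_deg_one K i) ?_ (pOpen_X_affine K i) (T i) (hT i).symm ?_ _
    · rw [gmap_apply, MvPolynomial.map_X]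
    · intro t ht
      exact ⟨m i t, h i t, hh i t, H i t, hL _ (Or.inr (Set.mem_iUnion.mpr ⟨i, t, ht, rfl⟩))⟩

end

section
open HomogeneousLocalization

lemma eval₂_mul_of_isHomogeneous {R S σ : Type} [CommRing R] [CommRing S] (φ : R →+* S)
    (a : σ → S) (t : S) {h : MvPolynomial σ R} {m : ℕ} (hh : h.IsHomogeneous m) :
    h.eval₂ φ (fun j ↦ a j * t) = h.eval₂ φ a * t ^ m := by
  rw [MvPolynomial.eval₂_eq, MvPolynomial.eval₂_eq, Finset.sum_mul]
  refine Finset.sum_congr rfl fun d hd ↦ ?_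
  have := hh (MvPolynomial.mem_support_iff.mp hd)
  simp only [mul_pow, Finset.prod_mul_distrib, Finset.prod_pow_eq_pow_sum]
  rw [mul_assoc]
  congr 3
  rw [← this, Finsupp.weight_apply, Finsupp.sum]
  simp

/-- The coordinate function `x_j / x_i`. -/
def coord (R : Type) [CommRing R] {n : ℕ} (i j : Fin (n + 1)) :
    Away (MvPolynomial.homogeneousSubmodule (Fin (n + 1)) R) (MvPolynomial.X i) :=
  Away.mk _ (X_mem_deg_one R i) 1 (MvPolynomial.X j) (X_mem_deg_one R j)

lemma mk_eq_eval₂ {R : Type} [CommRing R] {n : ℕ} (i : Fin (n + 1)) (m : ℕ)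
    (h : MvPolynomial (Fin (n + 1)) R)
    (hh : h ∈ MvPolynomial.homogeneousSubmodule (Fin (n + 1)) R (m • 1)) :
    Away.mk _ (X_mem_deg_one R i) m h hh =
      h.eval₂ (toAway (MvPolynomial.X i)) (coord R i) := by
  apply val_injective
  change _ = algebraMap (Away (MvPolynomial.homogeneousSubmodule (Fin (n + 1)) R)
    (MvPolynomial.X i)) (Localization (Submonoid.powers
    (MvPolynomial.X i : MvPolynomial (Fin (n + 1)) R))) _
  rw [MvPolynomial.hom_eval₂]
  have hX : (MvPolynomial.X i : MvPolynomial (Fin (n + 1)) R) ∈ Submonoid.powers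
    (MvPolynomial.X i : MvPolynomial (Fin (n + 1)) R) := Submonoid.mem_powers _
  have h1 : (algebraMap (Away (MvPolynomial.homogeneousSubmodule (Fin (n + 1)) R)
      (MvPolynomial.X i)) (Localization (Submonoid.powers
      (MvPolynomial.X i : MvPolynomial (Fin (n + 1)) R)))).comp (toAway (MvPolynomial.X i)) =
      (algebraMap (MvPolynomial (Fin (n + 1)) R) (Localization (Submonoid.powers
      (MvPolynomial.X i : MvPolynomial (Fin (n + 1)) R)))).comp MvPolynomial.C := by
    ext x; exact val_toAway _ x
  have h2 : (fun j ↦ algebraMap (Away (MvPolynomial.homogeneousSubmodule (Fin (n + 1)) R)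
      (MvPolynomial.X i)) (Localization (Submonoid.powers
      (MvPolynomial.X i : MvPolynomial (Fin (n + 1)) R))) (coord R i j)) =
      fun j ↦ algebraMap (MvPolynomial (Fin (n + 1)) R) (Localization (Submonoid.powers
      (MvPolynomial.X i : MvPolynomial (Fin (n + 1)) R))) (MvPolynomial.X j) *
        Localization.mk 1 ⟨MvPolynomial.X i, hX⟩ := by
    funext j
    change val (Away.mk _ (X_mem_deg_one R i) 1 (MvPolynomial.X j) (X_mem_deg_one R j)) = _
    rw [Away.val_mk, ← Localization.mk_one_eq_algebraMap, Localization.mk_mul]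
    congr 1
    simp
  rw [h1, h2]
  have hh' : h.IsHomogeneous m := by
    have : h.IsHomogeneous (m • 1) := hh
    simpa using this
  refine Eq.trans ?_ (eval₂_mul_of_isHomogeneous _ _ _ hh').symm
  have h3 := MvPolynomial.hom_eval₂ h MvPolynomial.C (algebraMap (MvPolynomial (Fin (n + 1)) R)
    (Localization (Submonoid.powers (MvPolynomial.X i : MvPolynomial (Fin (n + 1)) R))))
    MvPolynomial.X
  rw [MvPolynomial.eval₂_eta] at h3
  rw [← h3]
  rw [Away.val_mk, ← Localization.mk_one_eq_algebraMap, Localization.mk_pow, Localization.mk_mul]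
  congr 1
  · simp
  · ext1; simp

lemma away_ext {R F : Type} [CommRing R] [CommRing F] {n : ℕ} {i : Fin (n + 1)}
    (u v : Away (MvPolynomial.homogeneousSubmodule (Fin (n + 1)) R) (MvPolynomial.X i) →+* F)
    (h0 : u.comp (toAway _) = v.comp (toAway _))
    (h1 : ∀ j, u (coord R i j) = v (coord R i j)) : u = v := by
  ext x
  obtain ⟨m, h, hh, rfl⟩ := Away.mk_surjective _ (X_mem_deg_one R i) x
  rw [mk_eq_eval₂, MvPolynomial.hom_eval₂, MvPolynomial.hom_eval₂, h0]
  congr 1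
  funext j
  exact h1 j

lemma exists_mu {R S : Type} [CommRing R] [CommRing S] [Algebra R S] [Module.Flat R S]
    {n : ℕ} (i : Fin (n + 1)) :
    ∃ μ : Away (MvPolynomial.homogeneousSubmodule (Fin (n + 1)) R) (MvPolynomial.X i) →+*
        Away (MvPolynomial.homogeneousSubmodule (Fin (n + 1)) S) (MvPolynomial.X i),
      chart (MvPolynomial.X i) (X_mem_deg_one S i) one_pos ≫ projMap R S n =
        Spec.map (CommRingCat.ofHom μ) ≫
          chart (MvPolynomial.X i) (X_mem_deg_one R i) one_pos ∧
      (∀ j, μ (coord R i j) = coord S i j) ∧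
      μ.comp (toAway _) = (toAway _).comp (algebraMap R S) := by
  have key (g : MvPolynomial (Fin (n + 1)) S) (hg : gmap R S n (MvPolynomial.X i) = g)
      (hg1 : g ∈ MvPolynomial.homogeneousSubmodule (Fin (n + 1)) S 1) :
    ∃ μ : Away (MvPolynomial.homogeneousSubmodule (Fin (n + 1)) R) (MvPolynomial.X i) →+*
        Away (MvPolynomial.homogeneousSubmodule (Fin (n + 1)) S) g,
      chart g hg1 one_pos ≫ projMap R S n =
        Spec.map (CommRingCat.ofHom μ) ≫
          chart (MvPolynomial.X i) (X_mem_deg_one R i) one_pos ∧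
      (∀ j, μ (coord R i j) = Away.mk _ hg1 1 (MvPolynomial.X j) (X_mem_deg_one S j)) ∧
      μ.comp (toAway _) = (toAway _).comp (algebraMap R S) := by
    subst hg
    refine ⟨Away.map (gmap R S n) (MvPolynomial.X i), chart_projMap _ _ _, fun j ↦ ?_, ?_⟩
    · refine (Away.map_mk _ _ _ _ _ _).trans ?_
      congr 1
      rw [gmap_apply, MvPolynomial.map_X]
    · exact congr(CommRingCat.Hom.hom $((away_isPushout (S := S)
        (MvPolynomial.X i) (X_mem_deg_one R i)).w)).symm
  exact key _ (by rw [gmap_apply, MvPolynomial.map_X]) _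

end

section
open HomogeneousLocalization

lemma fromSpecStalk_eqToHom {Y : Scheme} {x y : Y} (h : x = y) :
    Spec.map (eqToHom (congrArg Y.presheaf.stalk h)) ≫ Y.fromSpecStalk x = Y.fromSpecStalk y := by
  subst h; simp

lemma fromSpecStalk_act {k K : Type} [Field k] [Field K] [Algebra k K]
    {Y : Scheme} [IrreducibleSpace Y] {p : Y ⟶ Spec (CommRingCat.of K)}
    (D : DescentDatum k K Y p) (σ : K ≃ₐ[k] K) :
    Y.fromSpecStalk (genericPoint Y) ≫ (D.act σ).hom =
      Spec.map (D.ffAction σ⁻¹) ≫ Y.fromSpecStalk (genericPoint Y) := by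
  have key (τ : K ≃ₐ[k] K) : Y.fromSpecStalk (genericPoint Y) ≫ (D.act τ⁻¹).hom =
      Spec.map (D.ffAction τ) ≫ Y.fromSpecStalk (genericPoint Y) := by
    rw [DescentDatum.ffAction, Spec.map_comp, Category.assoc, fromSpecStalk_eqToHom
      (aut_base_genericPoint ((D.act τ⁻¹ : Aut Y) : Y ≅ Y)).symm]
    exact (Scheme.SpecMap_stalkMap_fromSpecStalk _).symm
  have := key σ⁻¹
  rwa [inv_inv] at this

lemma isDominant_fromSpecStalk {Y : Scheme} [IrreducibleSpace Y] :
    IsDominant (Y.fromSpecStalk (genericPoint Y)) := by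
  refine ⟨?_⟩
  rw [DenseRange, Scheme.range_fromSpecStalk]
  have h := genericPoint_spec Y
  rw [IsGenericPoint, ← dense_iff_closure_eq] at h
  exact h.mono (by rintro _ rfl; exact specializes_rfl)

/-- The morphism from the spectrum of the function field factors through a standard chart. -/
lemma exists_factor {K F : Type} [Field K] [Field F] {n : ℕ}
    (a : Spec (CommRingCat.of F) ⟶ ProjSpace K n) :
    ∃ (i : Fin (n + 1)) (ψ : Away (MvPolynomial.homogeneousSubmodule (Fin (n + 1)) K)
        (MvPolynomial.X i) →+* F),
      a = Spec.map (CommRingCat.ofHom ψ) ≫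
        chart (MvPolynomial.X i) (X_mem_deg_one K i) one_pos := by
  let pt : Spec (CommRingCat.of F) := IsLocalRing.closedPoint F
  have : a pt ∈ (⊤ : (ProjSpace K n).Opens) := trivial
  rw [← iSup_pOpen_X, TopologicalSpace.Opens.mem_iSup] at this
  obtain ⟨i, hi⟩ := this
  have hr : Set.range a ⊆ Set.range (chart (MvPolynomial.X i) (X_mem_deg_one K i) one_pos) := by
    rintro _ ⟨x, rfl⟩
    have hx : x = pt := Subsingleton.elim (α := PrimeSpectrum F) _ _
    rw [hx]
    have := chart_opensRange (MvPolynomial.X i) (X_mem_deg_one K i) one_pos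
    rw [← this] at hi
    exact hi
  let l := IsOpenImmersion.lift (chart (MvPolynomial.X i) (X_mem_deg_one K i) one_pos) a hr
  refine ⟨i, (Spec.preimage l).hom, ?_⟩
  have : Spec.map (CommRingCat.ofHom (Spec.preimage l).hom) = l := Spec.map_preimage l
  rw [this]
  exact (IsOpenImmersion.lift_fac _ _ _).symm

lemma equivariance {k K : Type} [Field k] [Field K] [Algebra k K]
    {Y : Scheme} [IsIntegral Y] {p : Y ⟶ Spec (CommRingCat.of K)}
    (D : DescentDatum k K Y p) (hcont : D.IsContinuous) {n : ℕ} (f : Y ⟶ ProjSpace K n)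
    (hf : f ≫ ProjSpace.structMap K n = p) :
    ∃ L0 : IntermediateField k K, L0.FG ∧ ∀ L : IntermediateField k K, L0 ≤ L →
      ∀ σ : K ≃ₐ[k] K, (∀ x ∈ L, σ x = x) →
        (D.act σ).hom ≫ f ≫ projMap L K n = f ≫ projMap L K n := by
  let ι := Y.fromSpecStalk (genericPoint Y)
  let F := Y.functionField
  obtain ⟨i, ψ, hψ⟩ := exists_factor (F := Y.functionField) (ι ≫ f)
  choose M hM hM' using fun j ↦ hcont (ψ (coord K i j))
  refine ⟨⨆ j, M j, IntermediateField.fg_iSup hM, fun L hL σ hσ ↦ ?_⟩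
  have hσ' : ∀ x ∈ L, (σ⁻¹ : K ≃ₐ[k] K) x = x := fun x hx ↦
    (AlgEquiv.symm_apply_eq σ).mpr (hσ x hx).symm
  have hc (j) : (D.ffAction σ⁻¹).hom (ψ (coord K i j)) = ψ (coord K i j) :=
    hM' j _ fun x hx ↦ hσ' x (hL ((le_iSup M j) hx))
  obtain ⟨μ, hμ1, hμ2, hμ3⟩ := exists_mu (R := L) (S := K) i
  have hsep : (ProjSpace L n).IsSeparated := by delta ProjSpace; infer_instance
  have := isDominant_fromSpecStalk (Y := Y)
  apply ext_of_isDominant (Y.fromSpecStalk (genericPoint Y))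
  have e1 : ι ≫ f ≫ projMap L K n = Spec.map (CommRingCat.ofHom (ψ.comp μ)) ≫
      chart (MvPolynomial.X i) (X_mem_deg_one L i) one_pos := by
    rw [reassoc_of% hψ, hμ1, CommRingCat.ofHom_comp, Spec.map_comp, Category.assoc]
  have e0 : ι ≫ (D.act σ).hom = Spec.map (D.ffAction σ⁻¹) ≫ ι := fromSpecStalk_act D σ
  change ι ≫ (D.act σ).hom ≫ f ≫ _ = ι ≫ f ≫ _
  rw [reassoc_of% e0, e1, ← Spec.map_comp_assoc]
  congr 2
  ext1
  refine away_ext _ _ ?_ fun j ↦ ?_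
  · have e2 : ι ≫ p = Spec.map (CommRingCat.ofHom (ψ.comp (toAway _))) := by
      rw [← hf, reassoc_of% hψ, chart_structMap, ← Spec.map_comp, CommRingCat.ofHom_comp]
    have e3 : Spec.map (D.ffAction σ⁻¹) ≫ ι ≫ p ≫
        Spec.map (CommRingCat.ofHom (algebraMap L K)) = ι ≫ p ≫
        Spec.map (CommRingCat.ofHom (algebraMap L K)) := by
      rw [← reassoc_of% e0, reassoc_of% (D.compat σ), specAut_comp_val k K L σ hσ]
    rw [reassoc_of% e2, ← Spec.map_comp, ← Spec.map_comp] at e3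
    have e4 := Spec.map_injective e3
    have e5 := congr(CommRingCat.Hom.hom $e4)
    ext x
    change (D.ffAction σ⁻¹).hom (ψ ((μ.comp (toAway _)) x)) = ψ ((μ.comp (toAway _)) x)
    rw [hμ3]
    exact congr($e5 x)
  · change (D.ffAction σ⁻¹).hom (ψ (μ _)) = ψ (μ _)
    rw [hμ2, hc]

end

/-- A continuous descent datum is effective over a finitely generated
subfield: an integral quasi-projective `K`-scheme with a continuous descent datum with
respect to `K/k` descends, compatibly with the pointwise stabilizer of `L` in `Aut(K/k)`,
to a quasi-projective scheme over some intermediate field `L` finitely generated over `k`. -/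
theorem descent_datum_effective_over_finitely_generated_subfield
    [CharZero k] [IsAlgClosed K]
    -- `K` has infinite transcendence degree over `k`
    (htr : ∀ L : IntermediateField k K, L.FG → ∃ x : K, Transcendental L x)
    (Y : Scheme) [IsIntegral Y] (p : Y ⟶ Spec (CommRingCat.of K))
    -- `Y` is quasi-projective over `K`
    (hqp : QuasiProjectiveOver K p)
    -- a continuous descent datum on `Y` with respect to `K/k`
    (D : DescentDatum k K Y p) (hcont : D.IsContinuous) :
    ∃ L : IntermediateField k K, L.FG ∧
      ∃ (Y' : Scheme) (q : Y' ⟶ Spec (CommRingCat.of (↥L)))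
        (e : Y ≅ pullback q (Spec.map (CommRingCat.ofHom (algebraMap (↥L) K)))),
        -- `Y'` is quasi-projective over `L`
        QuasiProjectiveOver (↥L) q ∧
        -- the isomorphism is over `Spec K`
        e.hom ≫ pullback.snd q (Spec.map (CommRingCat.ofHom (algebraMap (↥L) K))) = p ∧
        -- for every `σ` fixing `L` pointwise, the action of `σ` on `Y` corresponds to
        -- `id_{Y'} × Spec (σ⁻¹)`
        ∀ (σ : K ≃ₐ[k] K) (hσ : ∀ x ∈ L, σ x = x),
          (D.act σ).hom ≫ e.hom = e.hom ≫
            pullback.map q (Spec.map (CommRingCat.ofHom (algebraMap (↥L) K)))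
              q (Spec.map (CommRingCat.ofHom (algebraMap (↥L) K)))
              (𝟙 Y') (specAut k K σ) (𝟙 (Spec (CommRingCat.of (↥L))))
              (by simp) (by rw [Category.comp_id, specAut_comp_val k K L σ hσ]) := by
  obtain ⟨n, f, hfi, hf⟩ := hqp
  obtain ⟨L1, hL1, H1⟩ := exists_descent k K f
  obtain ⟨L2, hL2, H2⟩ := equivariance D hcont f hf
  have hLfg : (L1 ⊔ L2).FG := IntermediateField.fg_sup hL1 hL2
  generalize L1 ⊔ L2 = L, (le_sup_left : L1 ≤ L1 ⊔ L2) = h1,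
    (le_sup_right : L2 ≤ L1 ⊔ L2) = h2 at hLfg
  obtain ⟨Y', f', g, hf', hpb⟩ := H1 L h1
  have hpb2 : IsPullback g p (f' ≫ ProjSpace.structMap L n)
      (Spec.map (CommRingCat.ofHom (algebraMap L K))) := by
    have := hpb.paste_vert (projMap_isPullback L K n)
    rwa [hf] at this
  refine ⟨L, hLfg, Y', f' ≫ ProjSpace.structMap L n, hpb2.isoPullback, ⟨n, f', hf', rfl⟩,
    hpb2.isoPullback_hom_snd, fun σ hσ ↦ ?_⟩
  have hg : (D.act σ).hom ≫ g = g := by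
    rw [← cancel_mono f', Category.assoc, hpb.w]
    exact H2 L h2 σ hσ
  apply pullback.hom_ext
  · simp only [Category.assoc, pullback.lift_fst, pullback.map, Category.comp_id,
      IsPullback.isoPullback_hom_fst, hg]
  · simp only [Category.assoc, pullback.lift_snd, pullback.map,
      IsPullback.isoPullback_hom_snd, IsPullback.isoPullback_hom_snd_assoc, D.compat]

end Paper
end
end
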